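/- arXiv:2204.13000 — 2 statements merged into one kernel-verified Lean document; each statement's English description precedes it below -/
import Mathlib

section
/- There exist a dendrite D and a continuous map f : D → D such that: (1) f has zero topological entropy; (2) every point of D is periodic or eventually periodic under f; (3) the non-wandering set of f equals the set of periodic points, Ω(f) = P(f); (4) h_∞(f|_{Ω(f)}) > 0 (in particular h_∞(f) > 0); and (5) f has no Li–Yorke pair, so f is not Li–Yorke chaotic. -/
open Set Filter Topology Function
open scoped ENNReal

/-- A subset of a topological space is an *arc* if it is homeomorphic to `[0,1]`. -/
def IsArc {X : Type*} [TopologicalSpace X] (A : Set X) : Prop :=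
  Nonempty (A ≃ₜ Set.Icc (0 : ℝ) 1)

/-- A point `p` is an *endpoint* of the arc `A` if `p ∈ A` and `A \ {p}` is connected. -/
def IsArcEndpoint {X : Type*} [TopologicalSpace X] (A : Set X) (p : X) : Prop :=
  p ∈ A ∧ IsConnected (A \ {p})

/-- A subset is a *simple closed curve* if it is homeomorphic to the unit circle. -/
def IsSimpleClosedCurve {X : Type*} [TopologicalSpace X] (S : Set X) : Prop :=
  Nonempty (S ≃ₜ Metric.sphere (0 : ℂ) 1)

/-- A *tree* is a compact connected metric space which is a union of finitely many arcs,
any two of which are disjoint or intersect only in (one or both of) their endpoints,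
and which contains no simple closed curve. -/
def IsTree (X : Type*) [MetricSpace X] : Prop :=
  CompactSpace X ∧ ConnectedSpace X ∧
    (∃ 𝒜 : Finset (Set X), (∀ A ∈ 𝒜, IsArc A) ∧ ⋃₀ (𝒜 : Set (Set X)) = Set.univ ∧
      ∀ A ∈ 𝒜, ∀ B ∈ 𝒜, A ≠ B → ∀ p ∈ A ∩ B, IsArcEndpoint A p ∧ IsArcEndpoint B p) ∧
    ∀ S : Set X, ¬ IsSimpleClosedCurve S

/-- A *dendrite* is a locally connected continuum containing no simple closed curve. -/
def IsDendrite (X : Type*) [MetricSpace X] : Prop :=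
  CompactSpace X ∧ ConnectedSpace X ∧ LocallyConnectedSpace X ∧
    ∀ S : Set X, ¬ IsSimpleClosedCurve S

/-- `𝒰` is a finite open cover of the subset `Y`. -/
def IsOpenCoverOn {X : Type*} [TopologicalSpace X] (Y : Set X) (𝒰 : Finset (Set X)) : Prop :=
  (∀ U ∈ 𝒰, IsOpen U) ∧ Y ⊆ ⋃₀ (𝒰 : Set (Set X))

/-- `N(⋁_{i=1}^n f^{-a_i}(𝒰))`, relative to the subset `Y`: the minimal number `m` of elements
of the join cover `⋁_{i=1}^n f^{-a_i}(𝒰)` needed to cover `Y`. -/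
noncomputable def seqCoverCountOn {X : Type*} (f : X → X) (Y : Set X) (a : ℕ → ℕ)
    (𝒰 : Finset (Set X)) (n : ℕ) : ℕ :=
  sInf { m | ∃ c : Fin m → Fin n → Set X, (∀ j i, c j i ∈ 𝒰) ∧
    Y ⊆ ⋃ j, ⋂ i, f^[a i.1] ⁻¹' c j i }

/-- Topological sequence entropy of `f` restricted to the (invariant) subset `Y`,
with respect to the sequence `a`. -/
noncomputable def seqEntropyOn {X : Type*} [TopologicalSpace X] (f : X → X) (Y : Set X)
    (a : ℕ → ℕ) : ℝ≥0∞ :=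
  ⨆ (𝒰 : Finset (Set X)) (_ : IsOpenCoverOn Y 𝒰),
    Filter.limsup
      (fun n : ℕ => ENNReal.ofReal (Real.log (seqCoverCountOn f Y a 𝒰 n) / n)) Filter.atTop

/-- Topological sequence entropy of `f : X → X` with respect to the sequence `a`. -/
noncomputable def seqEntropy {X : Type*} [TopologicalSpace X] (f : X → X) (a : ℕ → ℕ) : ℝ≥0∞ :=
  seqEntropyOn f Set.univ a

/-- The ordinary topological entropy `h(f)`, i.e. the sequence entropy for `A = (0,1,2,…)`. -/
noncomputable def topEntropy {X : Type*} [TopologicalSpace X] (f : X → X) : ℝ≥0∞ :=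
  seqEntropy f id

/-- `h_∞(f|_Y)`: the supremum over all strictly increasing sequences of positive integers of
the topological sequence entropies of `f` restricted to `Y`. -/
noncomputable def supSeqEntropyOn {X : Type*} [TopologicalSpace X] (f : X → X) (Y : Set X) :
    ℝ≥0∞ :=
  ⨆ (a : ℕ → ℕ) (_ : StrictMono a) (_ : 1 ≤ a 0), seqEntropyOn f Y a

/-- `h_∞(f)`: the supremum of the topological sequence entropies of `f`. -/
noncomputable def supSeqEntropy {X : Type*} [TopologicalSpace X] (f : X → X) : ℝ≥0∞ :=
  supSeqEntropyOn f Set.univ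

/-- The ω-limit set `ω_f(x) = ⋂_n closure {f^k(x) : k ≥ n}`. -/
def omegaLimitSet {X : Type*} [TopologicalSpace X] (f : X → X) (x : X) : Set X :=
  ⋂ n : ℕ, closure ((fun k => f^[k] x) '' Set.Ici n)

/-- `ω(f) = ⋃_x ω_f(x)`. -/
def omegaSet {X : Type*} [TopologicalSpace X] (f : X → X) : Set X :=
  ⋃ x : X, omegaLimitSet f x

/-- The non-wandering set `Ω(f)`. -/
def nonWanderingSet {X : Type*} [TopologicalSpace X] (f : X → X) : Set X :=
  { x | ∀ U : Set X, IsOpen U → x ∈ U → ∃ n, 1 ≤ n ∧ (f^[n] ⁻¹' U ∩ U).Nonempty }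

/-- There is an ε-chain from `x` to `y` under `f`. -/
def EpsChain {X : Type*} [MetricSpace X] (f : X → X) (ε : ℝ) (x y : X) : Prop :=
  ∃ n, 1 ≤ n ∧ ∃ c : ℕ → X, c 0 = x ∧ c n = y ∧ ∀ i < n, dist (f (c i)) (c (i + 1)) < ε

/-- The chain recurrent set `CR(f)`. -/
def chainRecurrentSet {X : Type*} [MetricSpace X] (f : X → X) : Set X :=
  { x | ∀ ε > 0, EpsChain f ε x x }

/-- The chain recurrent set of the restriction `f|_Y`: chain recurrence witnessed by
ε-chains lying entirely inside `Y`. -/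
def chainRecurrentSetOn {X : Type*} [MetricSpace X] (f : X → X) (Y : Set X) : Set X :=
  { x ∈ Y | ∀ ε > 0, ∃ n, 1 ≤ n ∧ ∃ c : ℕ → X, c 0 = x ∧ c n = x ∧
      (∀ i ≤ n, c i ∈ Y) ∧ ∀ i < n, dist (f (c i)) (c (i + 1)) < ε }

/-- `I` is a periodic arc of `f` of period `s`: an arc with `f^s(I) ⊆ I` whose iterates
`I, f(I), …, f^{s-1}(I)` are pairwise disjoint. -/
def IsPeriodicArc {X : Type*} [TopologicalSpace X] (f : X → X) (I : Set X) (s : ℕ) : Prop :=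
  IsArc I ∧ 1 ≤ s ∧ Set.MapsTo f^[s] I I ∧
    ∀ i j, i < j → j < s → Disjoint (f^[i] '' I) (f^[j] '' I)

/-- `Orb_f(I) = I ∪ f(I) ∪ … ∪ f^{s-1}(I)`. -/
def arcOrbit {X : Type*} (f : X → X) (I : Set X) (s : ℕ) : Set X :=
  ⋃ i ∈ Finset.range s, f^[i] '' I

/-- `I` is an independence set for the pair `(U, V)` under `f`. -/
def IsIndepSetPair {X : Type*} (f : X → X) (U V : Set X) (I : Finset ℕ) : Prop :=
  ∀ J ⊆ I, J.Nonempty → ∀ s : ℕ → Bool,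
    (⋂ j ∈ J, f^[j] ⁻¹' (if s j then U else V)).Nonempty

/-- `(x, y)` is an IN-pair of `(X, f)`. -/
def INPair {X : Type*} [TopologicalSpace X] (f : X → X) (x y : X) : Prop :=
  ∀ U ∈ nhds x, ∀ V ∈ nhds y, ∀ m : ℕ, ∃ I : Finset ℕ, m ≤ I.card ∧ IsIndepSetPair f U V I

/-- The set `IN(X, f)` of IN-pairs of `(X, f)`. -/
def INPairs {X : Type*} [TopologicalSpace X] (f : X → X) : Set (X × X) :=
  { p | INPair f p.1 p.2 }

/-- `(x, y)` is an IN-pair of the restricted (sub)system `(Y, f|_Y)`, for `Y` invariant. -/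
def INPairOn {X : Type*} [TopologicalSpace X] (f : X → X) (Y : Set X) (x y : X) : Prop :=
  x ∈ Y ∧ y ∈ Y ∧ ∀ U ∈ nhds x, ∀ V ∈ nhds y, ∀ m : ℕ, ∃ I : Finset ℕ, m ≤ I.card ∧
    ∀ J ⊆ I, J.Nonempty → ∀ s : ℕ → Bool,
      (Y ∩ ⋂ j ∈ J, f^[j] ⁻¹' (if s j then U else V)).Nonempty

/-- `(x, y)` is a Li–Yorke pair for `f`. -/
def LiYorkePair {X : Type*} [MetricSpace X] (f : X → X) (x y : X) : Prop :=
  Filter.liminf (fun n : ℕ => dist (f^[n] x) (f^[n] y)) Filter.atTop = 0 ∧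
    0 < Filter.limsup (fun n : ℕ => dist (f^[n] x) (f^[n] y)) Filter.atTop

/-- Combinatorial data for a comb-like dendrite with a permutation of its sticks. -/
structure StickData where
  ι : Type
  cnt : Countable ι
  b : ι → ℝ
  l : ι → ℝ
  σ : ι → ι
  binj : Function.Injective b
  b0 : ∀ i, 0 ≤ b i
  b2 : ∀ i, b i ≤ 2
  lpos : ∀ i, 0 < l i
  lle : ∀ i, l i ≤ 1
  lfin : ∀ δ > 0, {i | δ ≤ l i}.Finite
  lσ : ∀ i, l (σ i) = l i
  disp : ∀ i, |b (σ i) - b i| ≤ 3 * l i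
  per : ∀ i, ∃ n, 0 < n ∧ σ^[n] i = i

namespace StickData

/-- The stick with index `i`. -/
def stick (S : StickData) (i : S.ι) : Set (ℝ × ℝ) := {p | p.1 = S.b i ∧ 0 ≤ p.2 ∧ p.2 ≤ S.l i}

/-- The comb with sticks in `A`. -/
def comb (S : StickData) (A : Set S.ι) : Set (ℝ × ℝ) :=
  {p | 0 ≤ p.1 ∧ p.1 ≤ 2 ∧ p.2 = 0} ∪ ⋃ i ∈ A, S.stick i

/-- The dendrite. -/
def D (S : StickData) : Set (ℝ × ℝ) := S.comb Set.univ

lemma stick_closed (S : StickData) (i : S.ι) : IsClosed (S.stick i) :=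
  (isClosed_eq continuous_fst continuous_const).inter
    ((isClosed_le continuous_const continuous_snd).inter
      (isClosed_le continuous_snd continuous_const))

lemma mem_comb (S : StickData) (A : Set S.ι) (p : ℝ × ℝ) :
    p ∈ S.comb A ↔ (0 ≤ p.1 ∧ p.1 ≤ 2 ∧ p.2 = 0) ∨ ∃ i ∈ A, p.1 = S.b i ∧ 0 ≤ p.2 ∧ p.2 ≤ S.l i := by
  simp only [comb, stick, mem_union, mem_iUnion, exists_prop]; rfl

lemma comb_closed (S : StickData) (A : Set S.ι) : IsClosed (S.comb A) := by
  have key : S.comb A = ⋂ n : ℕ, ({p : ℝ × ℝ | 0 ≤ p.1 ∧ p.1 ≤ 2 ∧ 0 ≤ p.2 ∧ p.2 ≤ 1 / ((n : ℝ) + 1)} ∪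
      ⋃ i ∈ A ∩ {i | 1 / ((n : ℝ) + 1) ≤ S.l i}, S.stick i) := by
    ext p
    rw [mem_comb]
    simp only [mem_iInter, mem_union, mem_iUnion, mem_ofPred_eq, mem_inter_iff, stick, exists_prop]
    constructor
    · rintro (⟨h1, h2, h3⟩ | ⟨i, hi, h1, h2, h3⟩) n
      · left; refine ⟨h1, h2, h3.ge, ?_⟩; rw [h3]; positivity
      · by_cases h : 1 / ((n : ℝ) + 1) ≤ S.l i
        · right; exact ⟨i, ⟨hi, h⟩, h1, h2, h3⟩
        · left; push Not at h
          exact ⟨h1 ▸ S.b0 i, h1 ▸ S.b2 i, h2, by linarith⟩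
    · intro h
      have h0 : 0 ≤ p.2 := by
        rcases h 0 with h | ⟨i, _, h⟩
        · exact h.2.2.1
        · exact h.2.1
      rcases h0.eq_or_lt with h0 | h0
      · left
        rcases h 0 with h | ⟨i, _, h⟩
        · exact ⟨h.1, h.2.1, h0.symm⟩
        · exact ⟨h.1 ▸ S.b0 i, h.1 ▸ S.b2 i, h0.symm⟩
      · obtain ⟨n, hn⟩ := exists_nat_one_div_lt h0
        rcases h n with h | ⟨i, hi, h⟩
        · linarith [h.2.2.2]
        · right; exact ⟨i, hi.1, h⟩
  rw [key]
  refine isClosed_iInter fun n => IsClosed.union ?_ ?_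
  · refine (isClosed_le continuous_const continuous_fst).inter
      ((isClosed_le continuous_fst continuous_const).inter
      ((isClosed_le continuous_const continuous_snd).inter
      (isClosed_le continuous_snd continuous_const)))
  · refine ((S.lfin _ (by positivity)).subset inter_subset_right).isClosed_biUnion
      fun i _ => S.stick_closed i

lemma mem_D (S : StickData) (p : ℝ × ℝ) :
    p ∈ S.D ↔ (0 ≤ p.1 ∧ p.1 ≤ 2 ∧ p.2 = 0) ∨ ∃ i, p.1 = S.b i ∧ 0 ≤ p.2 ∧ p.2 ≤ S.l i := by
  simp [D, mem_comb]

lemma D_fst (S : StickData) {p : ℝ × ℝ} (h : p ∈ S.D) : 0 ≤ p.1 ∧ p.1 ≤ 2 ∧ 0 ≤ p.2 ∧ p.2 ≤ 1 := by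
  rcases (S.mem_D p).1 h with h | ⟨i, h1, h2, h3⟩
  · simp [h]
  · exact ⟨h1 ▸ S.b0 i, h1 ▸ S.b2 i, h2, h3.trans (S.lle i)⟩

lemma D_cases (S : StickData) {p : ℝ × ℝ} (h : p ∈ S.D) :
    p.2 = 0 ∨ ∃ i, p.1 = S.b i ∧ 0 < p.2 ∧ p.2 ≤ S.l i := by
  rcases (S.mem_D p).1 h with h | ⟨i, h1, h2, h3⟩
  · exact Or.inl h.2.2
  · rcases h2.eq_or_lt with h2 | h2
    · exact Or.inl h2.symm
    · exact Or.inr ⟨i, h1, h2, h3⟩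

lemma D_compact (S : StickData) : IsCompact S.D := by
  refine (isCompact_Icc (a := ((0 : ℝ), (0 : ℝ))) (b := ((2 : ℝ), (1 : ℝ)))).of_isClosed_subset
    (S.comb_closed _) fun p hp => ?_
  obtain ⟨h1, h2, h3, h4⟩ := S.D_fst hp
  exact ⟨⟨h1, h3⟩, ⟨h2, h4⟩⟩

lemma stick_convex (S : StickData) (i : S.ι) : Convex ℝ (S.stick i) := by
  have : S.stick i = {S.b i} ×ˢ Icc 0 (S.l i) := by
    ext p; simp [stick]
  rw [this]
  exact (convex_singleton _).prod (convex_Icc _ _)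

lemma near_stick (S : StickData) {p : ℝ × ℝ} {i : S.ι} (h1 : p.1 = S.b i) (h2 : 0 < p.2) :
    ∃ r > 0, ∀ q ∈ S.D, dist q p < r → q.1 = S.b i ∧ 0 < q.2 ∧ q.2 ≤ S.l i := by
  have hp : p ∈ (S.comb {i}ᶜ)ᶜ := by
    rw [mem_compl_iff, mem_comb]
    rintro (h | ⟨j, hj, h, -⟩)
    · exact h2.ne' h.2.2
    · exact hj (S.binj (h.symm.trans h1))
  obtain ⟨r, hr, h⟩ := Metric.isOpen_iff.1 (S.comb_closed {i}ᶜ).isOpen_compl p hp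
  refine ⟨r, hr, fun q hq hqp => ?_⟩
  have := h (Metric.mem_ball.2 hqp)
  rw [mem_compl_iff, mem_comb] at this
  push Not at this
  obtain ⟨g1, g2, g3, g4⟩ := S.D_fst hq
  have h0 := this.1 g1 g2
  rcases S.D_cases hq with h | ⟨j, k1, k2, k3⟩
  · exact absurd h h0
  · by_cases hj : j = i
    · subst hj; exact ⟨k1, k2, k3⟩
    · exact absurd k3 (not_le.2 (this.2 j hj k1 g3))

lemma D_preconn (S : StickData) : IsPreconnected S.D := by
  refine isPreconnected_of_forall (0, 0) fun p hp => ?_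
  have hb : Convex ℝ {p : ℝ × ℝ | 0 ≤ p.1 ∧ p.1 ≤ 2 ∧ p.2 = 0} := by
    have : {p : ℝ × ℝ | 0 ≤ p.1 ∧ p.1 ≤ 2 ∧ p.2 = 0} = Icc 0 2 ×ˢ {0} := by
      ext p; simp [and_assoc]
    rw [this]
    exact (convex_Icc _ _).prod (convex_singleton _)
  rcases (S.mem_D p).1 hp with h | ⟨i, h⟩
  · exact ⟨_, subset_union_left, by simp, h, hb.isPreconnected⟩
  · refine ⟨_, union_subset subset_union_left ?_, Or.inl (by simp), Or.inr h,
      hb.isPreconnected.union (S.b i, 0) ?_ ?_ (S.stick_convex i).isPreconnected⟩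
    · exact fun q hq => (S.mem_D q).2 (Or.inr ⟨i, hq⟩)
    · exact ⟨S.b0 i, S.b2 i, rfl⟩
    · exact ⟨rfl, le_rfl, (S.lpos i).le⟩

lemma ball_base (S : StickData) {p : ℝ × ℝ} (hp : p ∈ S.D) (h0 : p.2 = 0) {r : ℝ} (hr : 0 < r) :
    IsPreconnected (S.D ∩ Metric.ball p r) := by
  have hp' := S.D_fst hp
  refine isPreconnected_of_forall p fun q hq => ?_
  have hB : Convex ℝ ((Icc (0:ℝ) 2 ×ˢ {(0:ℝ)}) ∩ Metric.ball p r) :=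
    ((convex_Icc _ _).prod (convex_singleton _)).inter (convex_ball _ _)
  have hBs : (Icc (0:ℝ) 2 ×ˢ {(0:ℝ)}) ∩ Metric.ball p r ⊆ S.D ∩ Metric.ball p r := by
    rintro z ⟨⟨h1, h2⟩, h3⟩
    exact ⟨(S.mem_D z).2 (Or.inl ⟨h1.1, h1.2, h2⟩), h3⟩
  have hpB : p ∈ (Icc (0:ℝ) 2 ×ˢ {(0:ℝ)}) ∩ Metric.ball p r :=
    ⟨⟨⟨hp'.1, hp'.2.1⟩, h0⟩, Metric.mem_ball_self hr⟩
  rcases (S.mem_D q).1 hq.1 with h | ⟨i, h⟩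
  · exact ⟨_, hBs, hpB, ⟨⟨⟨h.1, h.2.1⟩, h.2.2⟩, hq.2⟩, hB.isPreconnected⟩
  · refine ⟨_ ∪ (S.stick i ∩ Metric.ball p r), union_subset hBs ?_, Or.inl hpB, Or.inr ⟨h, hq.2⟩,
      (hB.isPreconnected).union (S.b i, 0) ?_ ?_ ((S.stick_convex i).inter (convex_ball p r)).isPreconnected⟩
    · exact fun z hz => ⟨(S.mem_D z).2 (Or.inr ⟨i, hz.1⟩), hz.2⟩
    all_goals
      have hd : (S.b i, (0:ℝ)) ∈ Metric.ball p r := by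
        have := hq.2
        rw [Metric.mem_ball, Prod.dist_eq, max_lt_iff, h.1] at this
        rw [Metric.mem_ball, Prod.dist_eq, max_lt_iff]
        exact ⟨this.1, by simpa [h0] using hr⟩
    · exact ⟨⟨⟨S.b0 i, S.b2 i⟩, rfl⟩, hd⟩
    · exact ⟨⟨rfl, le_rfl, (S.lpos i).le⟩, hd⟩

lemma D_locConn (S : StickData) : LocallyConnectedSpace S.D := by
  refine locallyConnectedSpace_of_connected_bases (fun x r => Metric.ball x r)
    (fun x r => 0 < r ∧ IsPreconnected (Metric.ball x r)) (fun x => ?_) (fun x r h => h.2)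
  have hpre : ∀ r, IsPreconnected (S.D ∩ Metric.ball (x : ℝ × ℝ) r) →
      IsPreconnected (Metric.ball x r) := by
    intro r h
    rw [← Topology.IsInducing.subtypeVal.isPreconnected_image]
    convert h using 1
    ext z; constructor
    · rintro ⟨w, hw, rfl⟩; exact ⟨w.2, hw⟩
    · rintro ⟨h1, h2⟩; exact ⟨⟨z, h1⟩, h2, rfl⟩
  refine Filter.hasBasis_iff.2 fun t => ⟨fun ht => ?_, ?_⟩
  swap
  · rintro ⟨r, hr, h⟩
    exact Filter.mem_of_superset (Metric.ball_mem_nhds x hr.1) h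
  obtain ⟨r, hr, h⟩ := Metric.mem_nhds_iff.1 ht
  rcases S.D_cases x.2 with h0 | ⟨i, h1, h2, h3⟩
  · exact ⟨r, ⟨hr, hpre _ (S.ball_base x.2 h0 hr)⟩, h⟩
  · obtain ⟨r', hr', h'⟩ := S.near_stick h1 h2
    refine ⟨min r r', ⟨lt_min hr hr', hpre _ ?_⟩, (Metric.ball_subset_ball (min_le_left _ _)).trans h⟩
    have : S.D ∩ Metric.ball (x : ℝ × ℝ) (min r r') = S.stick i ∩ Metric.ball (x : ℝ × ℝ) (min r r') := by
      ext z; constructor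
      · rintro ⟨g1, g2⟩
        have := h' z g1 (lt_of_lt_of_le (Metric.mem_ball.1 g2) (min_le_right _ _))
        exact ⟨⟨this.1, this.2.1.le, this.2.2⟩, g2⟩
      · rintro ⟨g1, g2⟩
        exact ⟨(S.mem_D z).2 (Or.inr ⟨i, g1⟩), g2⟩
    rw [this]
    exact ((S.stick_convex i).inter (convex_ball _ _)).isPreconnected

end StickData

lemma sphere_minus_conn (v : Metric.sphere (0 : ℂ) 1) :
    IsPreconnected ({v}ᶜ : Set (Metric.sphere (0 : ℂ) 1)) := by
  have hv : ‖(v : ℂ)‖ = 1 := by simp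
  have h := (stereographic hv).symm.image_source_eq_target
  have hs : (stereographic hv).symm.source = univ := by simp
  have ht : (stereographic hv).symm.target = {v}ᶜ := by simp
  rw [ht, hs] at h
  rw [← h]
  refine isPreconnected_univ.image _ ?_
  have := (stereographic hv).symm.continuousOn
  rwa [hs] at this

lemma no_scc {X : Type*} [TopologicalSpace X]
    (hX : ∀ p q : X, p ≠ q → ∃ g : X → ℝ, Continuous g ∧ ∃ c, ∃ z, g z = c ∧ (∀ w, g w = c → w = z) ∧
      ((g p < c ∧ c < g q) ∨ (g q < c ∧ c < g p))) (T : Set X) : ¬ IsSimpleClosedCurve T := by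
  rintro ⟨φ⟩
  have key : ∀ z : X, IsPreconnected {t : T | (t : X) ≠ z} := by
    intro z
    by_cases hz : z ∈ T
    · have := (φ.symm.isPreconnected_image (s := {φ ⟨z, hz⟩}ᶜ)).2 (sphere_minus_conn _)
      convert this using 1
      ext t
      constructor
      · intro h
        refine ⟨φ t, ?_, by simp⟩
        intro h'
        apply h
        have := φ.injective h'
        rw [this]
      · rintro ⟨s, hs, rfl⟩ h
        apply hs
        have : φ.symm s = ⟨z, hz⟩ := Subtype.ext h
        simp [← this]
    · have : {t : T | (t : X) ≠ z} = univ := by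
        ext t; simp; rintro rfl; exact hz t.2
      rw [this]
      have h1 : IsPreconnected (univ : Set (Metric.sphere (0 : ℂ) 1)) := by
        have : IsPreconnected (Metric.sphere (0 : ℂ) 1) :=
          isPreconnected_sphere (by simp) 0 1
        exact (isPreconnected_iff_preconnectedSpace.1 this).isPreconnected_univ
      have := (φ.symm.isPreconnected_image (s := univ)).2 h1
      simpa using this
  obtain ⟨P, Q, hPQ⟩ : ∃ P Q : T, P ≠ Q := by
    refine ⟨φ.symm ⟨1, by simp⟩, φ.symm ⟨-1, by simp⟩, ?_⟩
    intro h
    have := φ.symm.injective h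
    simp only [Subtype.mk.injEq] at this
    norm_num [Complex.ext_iff] at this
  obtain ⟨g, hg, c, z, hzc, hz, h⟩ := hX P Q (fun h => hPQ (Subtype.ext h))
  have hpc : IsPreconnected ((fun t : T => g t) '' {t : T | (t : X) ≠ z}) :=
    (key z).image _ (hg.comp continuous_subtype_val).continuousOn
  have hnot : c ∉ ((fun t : T => g t) '' {t : T | (t : X) ≠ z}) := by
    rintro ⟨t, ht, h⟩; exact ht (hz _ h)
  have hoc := hpc.ordConnected
  have hP : g P ∈ ((fun t : T => g t) '' {t : T | (t : X) ≠ z}) := by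
    refine ⟨P, fun h' => ?_, rfl⟩
    rw [h', hzc] at h
    rcases h with h | h <;> linarith
  have hQ : g Q ∈ ((fun t : T => g t) '' {t : T | (t : X) ≠ z}) := by
    refine ⟨Q, fun h' => ?_, rfl⟩
    rw [h', hzc] at h
    rcases h with h | h <;> linarith
  rcases h with h | h
  · exact hnot (hoc.out hP hQ ⟨h.1.le, h.2.le⟩)
  · exact hnot (hoc.out hQ hP ⟨h.1.le, h.2.le⟩)

namespace StickData

lemma D_no_scc (S : StickData) (T : Set S.D) : ¬ IsSimpleClosedCurve T := by
  have := S.cnt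
  -- strict case by first coordinate
  have hx : ∀ p q : S.D, p.1.1 < q.1.1 → ∃ c, ∃ z : S.D, z.1.1 = c ∧ (∀ w : S.D, w.1.1 = c → w = z) ∧
      p.1.1 < c ∧ c < q.1.1 := by
    intro p q h
    have : ¬ (Ioo p.1.1 q.1.1 ⊆ range S.b) := by
      intro hs
      have h1 := (countable_range S.b).mono hs
      exact absurd (Cardinal.Real.Ioo_countable_iff.1 h1) (not_le.2 h)
    obtain ⟨c, hc, hcb⟩ := not_subset.1 this
    have hp := S.D_fst p.2
    have hq := S.D_fst q.2
    refine ⟨c, ⟨(c, 0), (S.mem_D _).2 (Or.inl ⟨hp.1.trans hc.1.le, hc.2.le.trans hq.2.1, rfl⟩)⟩,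
      rfl, ?_, hc⟩
    intro w hw
    rcases S.D_cases w.2 with h0 | ⟨i, h1, -⟩
    · exact Subtype.ext (Prod.ext hw h0)
    · exact absurd ⟨i, h1.symm.trans hw⟩ hcb
  have hy : ∀ p q : S.D, p.1.1 = q.1.1 → p.1.2 < q.1.2 → ∃ g : S.D → ℝ, Continuous g ∧ 
      ∃ c, ∃ z, g z = c ∧ (∀ w, g w = c → w = z) ∧ g p < c ∧ c < g q := by
    intro p q h1 h2
    obtain ⟨-, -, hp0, -⟩ := S.D_fst p.2
    rcases S.D_cases q.2 with h0 | ⟨i, hi, hq0, hql⟩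
    · linarith
    classical
    refine ⟨fun w => if w.1.1 = S.b i then w.1.2 else 0, ?_, (p.1.2 + q.1.2) / 2,
      ⟨(S.b i, (p.1.2 + q.1.2) / 2), (S.mem_D _).2 (Or.inr ⟨i, rfl, ?_, ?_⟩)⟩, ?_, ?_, ?_⟩
    · rw [continuous_iff_continuousAt]
      intro w
      rcases S.D_cases w.2 with h0 | ⟨j, hj, hw0, hwl⟩
      · rw [Metric.continuousAt_iff]
        intro ε hε
        refine ⟨ε, hε, fun x hx => ?_⟩
        have : dist x.1.2 w.1.2 < ε := lt_of_le_of_lt (le_max_right _ _) hx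
        rw [h0] at this
        by_cases h : x.1.1 = S.b i
        · simpa [h, h0] using this
        · simpa [h, h0] using hε
      · obtain ⟨r, hr, h⟩ := S.near_stick hj hw0
        have hev : ∀ᶠ x : S.D in 𝓝 w, x.1.1 = S.b j := by
          filter_upwards [Metric.ball_mem_nhds w hr] with x hx
          exact (h x x.2 hx).1
        by_cases hij : j = i
        · subst hij
          refine ContinuousAt.congr (f := fun x : S.D => x.1.2) (by fun_prop) ?_
          filter_upwards [hev] with x hx
          simp [hx]
        · refine ContinuousAt.congr (f := fun x : S.D => (0:ℝ)) (by fun_prop) ?_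
          filter_upwards [hev] with x hx
          have : S.b j ≠ S.b i := fun h => hij (S.binj h)
          simp [hx, this]
    · dsimp only; linarith
    · dsimp only; linarith
    · simp
    · intro w hw
      dsimp only at hw
      split_ifs at hw with h
      · exact Subtype.ext (Prod.ext h hw)
      · linarith
    · dsimp only
      rw [if_pos hi, if_pos (h1.trans hi)]
      constructor <;> linarith
  apply no_scc
  intro p q hpq
  rcases lt_trichotomy p.1.1 q.1.1 with h | h | h
  · obtain ⟨c, z, h1, h2, h3⟩ := hx p q h
    exact ⟨fun w => w.1.1, by fun_prop, c, z, h1, h2, Or.inl h3⟩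
  · rcases lt_trichotomy p.1.2 q.1.2 with h' | h' | h'
    · obtain ⟨g, hg, c, z, h1, h2, h3⟩ := hy p q h h'
      exact ⟨g, hg, c, z, h1, h2, Or.inl h3⟩
    · exact absurd (Subtype.ext (Prod.ext h h')) hpq
    · obtain ⟨g, hg, c, z, h1, h2, h3⟩ := hy q p h.symm h'
      exact ⟨g, hg, c, z, h1, h2, Or.inr h3⟩
  · obtain ⟨c, z, h1, h2, h3⟩ := hx q p h
    exact ⟨fun w => w.1.1, by fun_prop, c, z, h1, h2, Or.inr h3⟩

lemma D_dendrite (S : StickData) : IsDendrite S.D := by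
  refine ⟨isCompact_iff_compactSpace.1 S.D_compact, ?_, S.D_locConn, S.D_no_scc⟩
  exact isConnected_iff_connectedSpace.1 ⟨⟨(0, 0), (S.mem_D _).2 (Or.inl (by simp))⟩, S.D_preconn⟩

/-- stick length over a base point -/
noncomputable def len (S : StickData) : ℝ → ℝ := Function.extend S.b S.l 0

/-- displacement over a base point -/
noncomputable def dx (S : StickData) : ℝ → ℝ := Function.extend S.b (fun i => S.b (S.σ i) - S.b i) 0

/-- the map on the plane -/
noncomputable def F (S : StickData) (p : ℝ × ℝ) : ℝ × ℝ :=
  (p.1 + min 1 (2 * p.2 / S.len p.1) * S.dx p.1, max 0 (2 * p.2 - S.len p.1))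

lemma len_b (S : StickData) (i : S.ι) : S.len (S.b i) = S.l i := S.binj.extend_apply _ _ _

lemma dx_b (S : StickData) (i : S.ι) : S.dx (S.b i) = S.b (S.σ i) - S.b i :=
  S.binj.extend_apply _ _ _

lemma len_nonneg (S : StickData) (x : ℝ) : 0 ≤ S.len x := by
  by_cases h : ∃ i, S.b i = x
  · obtain ⟨i, rfl⟩ := h
    rw [len_b]; exact (S.lpos i).le
  · simp [len, Function.extend_apply' _ _ _ h]

lemma F_base (S : StickData) {p : ℝ × ℝ} (h : p.2 = 0) : S.F p = p := by
  apply Prod.ext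
  · simp [F, h]
  · simp [F, h, S.len_nonneg]

lemma F_low (S : StickData) (i : S.ι) {y : ℝ} (h : 2 * y ≤ S.l i) :
    S.F (S.b i, y) = (S.b i + (2 * y / S.l i) * (S.b (S.σ i) - S.b i), 0) := by
  have h0 := S.lpos i
  have h1 : 2 * y / S.l i ≤ 1 := by rw [div_le_one h0]; exact h
  simp [F, len_b, dx_b, h1, h]

lemma F_high (S : StickData) (i : S.ι) {y : ℝ} (h : S.l i ≤ 2 * y) :
    S.F (S.b i, y) = (S.b (S.σ i), 2 * y - S.l i) := by
  have h0 := S.lpos i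
  have h1 : 1 ≤ 2 * y / S.l i := by rw [one_le_div h0]; exact h
  simp [F, len_b, dx_b, h1, h]

lemma F_mem (S : StickData) {p : ℝ × ℝ} (hp : p ∈ S.D) : S.F p ∈ S.D := by
  rcases S.D_cases hp with h0 | ⟨i, hi, h0, hl⟩
  · rwa [S.F_base h0]
  · obtain ⟨x, y⟩ := p
    simp only at hi h0 hl
    subst hi
    rcases le_total (2 * y) (S.l i) with h | h
    · rw [S.F_low i h, mem_D]
      left
      have h1 : 2 * y / S.l i ≤ 1 := by rw [div_le_one (S.lpos i)]; exact h
      have h2 : 0 ≤ 2 * y / S.l i := by have := S.lpos i; positivity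
      have := S.b0 i; have := S.b2 i; have := S.b0 (S.σ i); have := S.b2 (S.σ i)
      refine ⟨?_, ?_, rfl⟩ <;> dsimp only <;> nlinarith
    · rw [S.F_high i h, mem_D]
      right
      refine ⟨S.σ i, rfl, ?_, ?_⟩ <;> dsimp only
      · linarith
      · rw [S.lσ]; linarith

/-- the displacement estimate -/
lemma F_disp (S : StickData) {p : ℝ × ℝ} (hp : p ∈ S.D) : dist (S.F p) p ≤ 6 * p.2 := by
  rcases S.D_cases hp with h0 | ⟨i, hi, h0, hl⟩
  · rw [S.F_base h0, h0]; simp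
  · obtain ⟨x, y⟩ := p
    simp only at hi h0 hl
    subst hi
    have hd := S.disp i
    have hl0 := S.lpos i
    rcases le_total (2 * y) (S.l i) with h | h
    · rw [S.F_low i h, Prod.dist_eq]
      refine max_le ?_ ?_
      · simp only [Real.dist_eq, add_sub_cancel_left, abs_mul]
        rw [abs_of_nonneg (by positivity), div_mul_eq_mul_div, div_le_iff₀ hl0]
        nlinarith
      · simp [Real.dist_eq, abs_of_pos h0]; linarith
    · rw [S.F_high i h, Prod.dist_eq]
      refine max_le ?_ ?_
      · simp only [Real.dist_eq]; linarith
      · simp only [Real.dist_eq]; rw [abs_le]; constructor <;> linarith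

lemma F_disp_len (S : StickData) {p : ℝ × ℝ} (hp : p ∈ S.D) {i : S.ι} (hi : p.1 = S.b i) :
    dist (S.F p) p ≤ 6 * S.l i := by
  have : p.2 ≤ S.l i := by
    rcases S.D_cases hp with h0 | ⟨j, hj, h0, hl⟩
    · rw [h0]; exact (S.lpos i).le
    · have : i = j := S.binj (hi.symm.trans hj)
      rw [this]; exact hl
  have := S.F_disp hp
  linarith

/-- the map on the dendrite -/
noncomputable def f (S : StickData) (p : S.D) : S.D := ⟨S.F p.1, S.F_mem p.2⟩

lemma f_cont (S : StickData) : Continuous S.f := by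
  refine Continuous.subtype_mk (f := fun p : S.D => S.F p.1) ?_ _
  rw [continuous_iff_continuousAt]
  intro w
  rcases S.D_cases w.2 with h0 | ⟨j, hj, hw0, hwl⟩
  · rw [Metric.continuousAt_iff]
    intro ε hε
    refine ⟨ε / 7, by positivity, fun x hx => ?_⟩
    have h1 : dist x.1.2 w.1.2 < ε / 7 := lt_of_le_of_lt (le_max_right _ _) hx
    rw [h0, Real.dist_eq, sub_zero] at h1
    have h2 := S.F_disp x.2
    have h3 := le_abs_self x.1.2
    have h4 : dist (x : ℝ × ℝ) w < ε / 7 := hx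
    rw [S.F_base h0]
    have := dist_triangle (S.F x) x (w : ℝ × ℝ)
    linarith
  · obtain ⟨r, hr, h⟩ := S.near_stick hj hw0
    refine ContinuousAt.congr (f := fun p : S.D =>
      (S.b j + min 1 (2 * p.1.2 / S.l j) * (S.b (S.σ j) - S.b j), max 0 (2 * p.1.2 - S.l j))) ?_ ?_
    · fun_prop
    · filter_upwards [Metric.ball_mem_nhds w hr] with x hx
      have := (h x x.2 hx).1
      simp [F, this, len_b, dx_b]

lemma f_iter (S : StickData) (n : ℕ) (p : S.D) : ((S.f^[n] p : S.D) : ℝ × ℝ) = S.F^[n] p := by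
  induction n with
  | zero => rfl
  | succ n ih => rw [Function.iterate_succ_apply', Function.iterate_succ_apply', ← ih]; rfl

lemma F_iter_base (S : StickData) (n : ℕ) {p : ℝ × ℝ} (h : p.2 = 0) : S.F^[n] p = p :=
  Function.iterate_fixed (S.F_base h) n

lemma lσn (S : StickData) (n : ℕ) (i : S.ι) : S.l (S.σ^[n] i) = S.l i := by
  induction n with
  | zero => rfl
  | succ n ih => rw [Function.iterate_succ_apply', S.lσ, ih]

lemma F_iter (S : StickData) (n : ℕ) (i : S.ι) {g : ℝ} (hg : 0 ≤ g) :
    (2 ^ n * g ≤ S.l i → S.F^[n] (S.b i, S.l i - g) = (S.b (S.σ^[n] i), S.l i - 2 ^ n * g)) ∧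
    (S.l i ≤ 2 ^ n * g → g ≤ S.l i → (S.F^[n] (S.b i, S.l i - g)).2 = 0) := by
  induction n with
  | zero =>
    refine ⟨fun h => by simp, fun h h' => ?_⟩
    simp at h ⊢; linarith
  | succ n ih =>
    have hpos : 0 ≤ 2 ^ n * g := by positivity
    refine ⟨fun h => ?_, fun h h' => ?_⟩
    · rw [pow_succ] at h
      rw [Function.iterate_succ_apply', ih.1 (by linarith)]
      have e : S.l i - 2 ^ n * g = S.l (S.σ^[n] i) - 2 ^ n * g := by rw [S.lσn]
      rw [S.F_high, Function.iterate_succ_apply', S.lσn]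
      · congr 1; ring
      · rw [S.lσn]; linarith
    · rw [Function.iterate_succ_apply']
      rcases le_total (2 ^ n * g) (S.l i) with h1 | h1
      · rw [ih.1 h1, S.F_low]
        rw [S.lσn]; rw [pow_succ] at h; linarith
      · rw [S.F_base (ih.2 h1 h')]
        exact ih.2 h1 h'

lemma D_gap (S : StickData) (p : S.D) : p.1.2 = 0 ∨
    ∃ i g, p.1 = (S.b i, S.l i - g) ∧ 0 ≤ g ∧ g < S.l i := by
  rcases S.D_cases p.2 with h | ⟨i, h1, h2, h3⟩
  · exact Or.inl h
  · exact Or.inr ⟨i, S.l i - p.1.2, Prod.ext h1 (by simp), by linarith, by linarith⟩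

lemma base_per (S : StickData) {p : S.D} (h : p.1.2 = 0) : p ∈ Function.periodicPts S.f :=
  ⟨1, one_pos, Subtype.ext (S.F_base h)⟩

lemma tip_per (S : StickData) {p : S.D} {i : S.ι} (h : p.1 = (S.b i, S.l i)) :
    p ∈ Function.periodicPts S.f := by
  obtain ⟨n, hn, h'⟩ := S.per i
  refine ⟨n, hn, Subtype.ext ?_⟩
  rw [f_iter, h]
  have := (S.F_iter n i le_rfl).1 (by simpa using (S.lpos i).le)
  simpa [h'] using this

lemma ev_per (S : StickData) (p : S.D) : ∃ k : ℕ, S.f^[k] p ∈ Function.periodicPts S.f := by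
  rcases S.D_gap p with h | ⟨i, g, hp, h0, h1⟩
  · exact ⟨0, S.base_per h⟩
  · rcases h0.eq_or_lt with h0 | h0
    · exact ⟨0, S.tip_per (i := i) (by rw [Function.iterate_zero_apply, hp, ← h0, sub_zero])⟩
    · obtain ⟨n, hn⟩ := pow_unbounded_of_one_lt (S.l i / g) one_lt_two
      rw [div_lt_iff₀ h0] at hn
      refine ⟨n, S.base_per ?_⟩
      rw [f_iter, hp]
      exact (S.F_iter n i h0.le).2 hn.le h1.le

lemma nonwand (S : StickData) : nonWanderingSet S.f = Function.periodicPts S.f := by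
  apply Subset.antisymm
  · intro p hp
    rcases S.D_gap p with h | ⟨i, g, hpe, h0, h1⟩
    · exact S.base_per h
    rcases h0.eq_or_lt with h0 | h0
    · exact S.tip_per (i := i) (by rw [hpe, ← h0, sub_zero])
    exfalso
    have hp1 : p.1.1 = S.b i := by rw [hpe]
    have hp2 : p.1.2 = S.l i - g := by rw [hpe]
    obtain ⟨r, hr, hU⟩ := S.near_stick hp1 (by rw [hp2]; linarith)
    obtain ⟨n, hn, q, hq1, hq2⟩ := hp (Metric.ball p (min r (g / 3))) Metric.isOpen_ball
      (Metric.mem_ball_self (by positivity))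
    have key : ∀ z ∈ Metric.ball p (min r (g / 3)), z.1.1 = S.b i ∧ 0 < z.1.2 ∧ z.1.2 ≤ S.l i ∧
        |z.1.2 - (S.l i - g)| < g / 3 := by
      intro z hz
      have h1 : dist (z : ℝ × ℝ) p < min r (g / 3) := hz
      obtain ⟨a1, a2, a3⟩ := hU z z.2 (h1.trans_le (min_le_left _ _))
      refine ⟨a1, a2, a3, ?_⟩
      have : dist z.1.2 p.1.2 < g / 3 :=
        lt_of_le_of_lt (le_max_right _ _) (h1.trans_le (min_le_right _ _))
      rwa [hp2, Real.dist_eq] at this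
    obtain ⟨a1, a2, a3, a4⟩ := key q hq2
    obtain ⟨c1, c2, c3, c4⟩ := key _ hq1
    rw [abs_lt] at a4 c4
    have hqe : q.1 = (S.b i, S.l i - (S.l i - q.1.2)) := Prod.ext a1 (by simp)
    rw [f_iter, hqe] at c1 c2 c3 c4
    have hI := S.F_iter n i (g := S.l i - q.1.2) (by linarith)
    rcases le_total (2 ^ n * (S.l i - q.1.2)) (S.l i) with h | h
    · rw [hI.1 h] at c4
      dsimp only at c4
      have : (2:ℝ) ≤ 2 ^ n := by
        calc (2:ℝ) = 2 ^ 1 := by norm_num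
          _ ≤ 2 ^ n := pow_le_pow_right₀ (by norm_num) hn
      nlinarith
    · rw [hI.2 h (by linarith)] at c2
      exact lt_irrefl _ c2
  · rintro p ⟨n, hn, h⟩ U hU hpU
    exact ⟨n, hn, p, by rw [mem_preimage, h]; exact hpU, hpU⟩

end StickData

lemma no_LY {X : Type*} [MetricSpace X] (f : X → X)
    (hf : ∀ x, ∃ k : ℕ, f^[k] x ∈ Function.periodicPts f) (x y : X) : ¬ LiYorkePair f x y := by
  rintro ⟨h1, h2⟩
  obtain ⟨k, n, hn, hk⟩ := hf x
  obtain ⟨l, m, hm, hl⟩ := hf y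
  set u : ℕ → ℝ := fun n => dist (f^[n] x) (f^[n] y) with hu
  have hper : ∀ j, u (k + l + j + n * m) = u (k + l + j) := by
    intro j
    have hx : f^[k + l + j + n * m] x = f^[k + l + j] x := by
      have e1 : k + l + j + n * m = (l + j) + (n * m + k) := by ring
      have e2 : k + l + j = (l + j) + k := by ring
      rw [e1, e2, iterate_add_apply f (l + j), iterate_add_apply f (n * m)]
      rw [show f^[n * m] (f^[k] x) = f^[k] x from (hk.mul_const m), iterate_add_apply f (l + j) k]
    have hy : f^[k + l + j + n * m] y = f^[k + l + j] y := by
      have e1 : k + l + j + n * m = (k + j) + (n * m + l) := by ring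
      have e2 : k + l + j = (k + j) + l := by ring
      rw [e1, e2, iterate_add_apply f (k + j), iterate_add_apply f (n * m)]
      rw [show f^[n * m] (f^[l] y) = f^[l] y from (hl.const_mul n), iterate_add_apply f (k + j) l]
    simp only [hu, hx, hy]
  have hN : 0 < n * m := Nat.mul_pos hn hm
  have hper2 : ∀ j, u (k + l + j) = u (k + l + j % (n * m)) := by
    intro j
    induction j using Nat.strong_induction_on with
    | _ j ih =>
      by_cases hj : j < n * m
      · rw [Nat.mod_eq_of_lt hj]
      · push Not at hj
        obtain ⟨j', rfl⟩ := Nat.exists_eq_add_of_le' hj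
        rw [← add_assoc, hper, ih j' (by omega), Nat.add_mod_right]
  by_cases hz : ∃ N, f^[N] x = f^[N] y
  · obtain ⟨N, hN⟩ := hz
    have : Tendsto u atTop (𝓝 0) := by
      refine tendsto_const_nhds.congr' ?_
      filter_upwards [eventually_ge_atTop N] with j hj
      obtain ⟨j', rfl⟩ := Nat.exists_eq_add_of_le' hj
      simp [hu, iterate_add_apply, hN]
    rw [this.limsup_eq] at h2
    exact lt_irrefl _ h2
  · push Not at hz
    have hpos : ∀ j, 0 < u j := fun j => dist_pos.2 (hz j)
    obtain ⟨j0, -, hj0⟩ := Finset.exists_min_image (Finset.range (n * m)) (fun j => u (k + l + j))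
      ⟨0, by simpa using hN⟩
    have hle : u (k + l + j0) ≤ liminf u atTop := by
      refine le_liminf_of_le ?_ ?_
      · obtain ⟨j1, -, hj1⟩ := Finset.exists_max_image (Finset.range (n * m)) (fun j => u (k + l + j))
          ⟨0, by simpa using hN⟩
        refine Filter.IsCoboundedUnder.of_frequently_le (a := u (k + l + j1)) ?_
        refine Eventually.frequently ?_
        filter_upwards [eventually_ge_atTop (k + l)] with j hj
        obtain ⟨j', rfl⟩ := Nat.exists_eq_add_of_le hj
        rw [hper2 j']
        exact hj1 _ (Finset.mem_range.2 (Nat.mod_lt _ hN))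
      · filter_upwards [eventually_ge_atTop (k + l)] with j hj
        obtain ⟨j', rfl⟩ := Nat.exists_eq_add_of_le hj
        rw [hper2 j']
        exact hj0 _ (Finset.mem_range.2 (Nat.mod_lt _ hN))
    rw [h1] at hle
    exact absurd hle (not_le.2 (hpos _))

lemma count_le {X : Type*} (f : X → X) (Y : Set X) (a : ℕ → ℕ) (U : Finset (Set X)) (n : ℕ)
    {κ : Type*} [Fintype κ] (c : κ → ℕ → Set X) (hc : ∀ k j, c k j ∈ U)
    (hY : ∀ x ∈ Y, ∃ k, ∀ j < n, f^[a j] x ∈ c k j) :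
    seqCoverCountOn f Y a U n ≤ Fintype.card κ := by
  apply Nat.sInf_le
  refine ⟨fun j i => c ((Fintype.equivFin κ).symm j) i, fun j i => hc _ _, fun x hx => ?_⟩
  obtain ⟨k, hk⟩ := hY x hx
  refine mem_iUnion.2 ⟨Fintype.equivFin κ k, mem_iInter.2 fun i => ?_⟩
  simpa using hk i i.2

lemma entropy_arith (C A k : ℕ) (hC : 1 ≤ C) (hk : 0 < k) (δ : ℝ) (hδ : Real.log C / k < δ)
    (N : ℕ → ℕ) (hN : ∀ n, N n ≤ C ^ (n / k + 1) + A * (n + 1)) :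
    ∀ᶠ n in atTop, Real.log (N n) / n ≤ δ := by
  have hC' : (1:ℝ) ≤ C := by exact_mod_cast hC
  have hk' : (0:ℝ) < k := by exact_mod_cast hk
  set B : ℝ := C * (1 + A) with hB
  have hBpos : 0 < B := by positivity
  have hlim : Tendsto (fun n : ℕ => Real.log (B * (n + 1)) / n) atTop (𝓝 0) := by
    have h1 : Tendsto (fun n : ℕ => Real.log B / (n : ℝ)) atTop (𝓝 0) :=
      tendsto_const_div_atTop_nhds_zero_nat _
    have h2 : Tendsto (fun n : ℕ => Real.log ((n : ℝ) + 1) / (n : ℝ)) atTop (𝓝 0) := by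
      have h3 : Tendsto (fun x : ℝ => Real.log x / x) atTop (𝓝 0) := by
        simpa using Real.isLittleO_log_id_atTop.tendsto_div_nhds_zero
      have h4 : Tendsto (fun n : ℕ => ((n : ℝ) + 1)) atTop atTop :=
        tendsto_atTop_add_const_right _ _ tendsto_natCast_atTop_atTop
      have h5 := (h3.comp h4).const_mul 2
      rw [mul_zero] at h5
      refine squeeze_zero' ?_ ?_ h5
      · filter_upwards with n
        have : 0 ≤ Real.log ((n:ℝ) + 1) := Real.log_nonneg (by linarith [n.cast_nonneg (α := ℝ)])
        positivity
      · filter_upwards [eventually_ge_atTop 1] with n hn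
        have hn' : (1:ℝ) ≤ n := by exact_mod_cast hn
        have : 0 ≤ Real.log ((n:ℝ) + 1) := Real.log_nonneg (by linarith)
        simp only [Function.comp]
        rw [← mul_div_assoc, div_le_div_iff₀ (by positivity) (by positivity)]
        nlinarith
    have h6 := h1.add h2
    rw [add_zero] at h6
    refine h6.congr fun n => ?_
    rw [Real.log_mul hBpos.ne' (by positivity), add_div]
  have hev := hlim.eventually (gt_mem_nhds (sub_pos.2 hδ))
  filter_upwards [hev, eventually_ge_atTop 1] with n hn hn1
  have hn' : (1:ℝ) ≤ n := by exact_mod_cast hn1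
  have hbound : (N n : ℝ) ≤ B * (n + 1) * C ^ (n / k) := by
    have h1 : (N n : ℝ) ≤ C ^ (n / k + 1) + A * (n + 1) := by exact_mod_cast hN n
    have h2 : (1:ℝ) ≤ C ^ (n / k) := one_le_pow₀ hC'
    have h3 : (0:ℝ) ≤ A := A.cast_nonneg
    have h4 : (C:ℝ) * C ^ (n / k) ≤ (C * C ^ (n/k)) * (n + 1) := by
      apply le_mul_of_one_le_right (by positivity); linarith
    have h5 : (A:ℝ) * (n + 1) ≤ (A * (n + 1)) * (C * C ^ (n/k)) := by
      apply le_mul_of_one_le_right (by positivity)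
      exact one_le_mul_of_one_le_of_one_le hC' h2
    rw [pow_succ] at h1
    rw [hB]
    calc (N n : ℝ) ≤ C * C ^ (n/k) + A * (n + 1) := by linarith
      _ ≤ (C * C ^ (n/k)) * (n + 1) + (A * (n + 1)) * (C * C ^ (n/k)) := by linarith
      _ = _ := by ring
  have hlog : Real.log (N n) ≤ Real.log (B * (n + 1)) + (n / k) * Real.log C := by
    rcases Nat.eq_zero_or_pos (N n) with h0 | h0
    · rw [h0]
      simp only [Nat.cast_zero, Real.log_zero]
      have h1 : 1 ≤ B * (n + 1) := by
        rw [hB]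
        have : (0:ℝ) ≤ A := A.cast_nonneg
        have h2 : (1:ℝ) ≤ C * (1 + A) := one_le_mul_of_one_le_of_one_le hC' (by linarith)
        exact one_le_mul_of_one_le_of_one_le h2 (by linarith)
      have := Real.log_nonneg h1
      have := Real.log_nonneg hC'
      positivity
    · calc Real.log (N n) ≤ Real.log (B * (n + 1) * C ^ (n / k)) :=
            Real.log_le_log (by exact_mod_cast h0) hbound
        _ = Real.log (B * (n + 1)) + (n / k : ℕ) * Real.log C := by
            rw [Real.log_mul (by positivity) (by positivity), Real.log_pow]
        _ ≤ _ := by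
            have := Real.log_nonneg hC'
            have := Nat.cast_div_le (α := ℝ) (m := n) (n := k)
            gcongr
  calc Real.log (N n) / n ≤ (Real.log (B * (n + 1)) + (n / k) * Real.log C) / n := by gcongr
    _ = Real.log (B * (n + 1)) / n + Real.log C / k := by field_simp
    _ ≤ δ := by linarith

namespace StickData

/-- the tip of a stick -/
def tip (S : StickData) (i : S.ι) : S.D :=
  ⟨(S.b i, S.l i), (S.mem_D _).2 (Or.inr ⟨i, rfl, (S.lpos i).le, le_rfl⟩)⟩

lemma f_tip (S : StickData) (n : ℕ) (i : S.ι) : S.f^[n] (S.tip i) = S.tip (S.σ^[n] i) := by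
  apply Subtype.ext
  rw [f_iter]
  have := (S.F_iter n i le_rfl).1 (by simpa using (S.lpos i).le)
  simpa [tip, S.lσn] using this

/-- points in slow part move slowly -/
lemma slow (S : StickData) {δ : ℝ} (hδ : 0 ≤ δ) (p : S.D)
    (hp : p.1.2 = 0 ∨ ∃ i, p.1.1 = S.b i ∧ S.l i ≤ δ) (n : ℕ) :
    (((S.f^[n] p).1.2 = 0 ∨ ∃ i, (S.f^[n] p).1.1 = S.b i ∧ S.l i ≤ δ)) := by
  induction n with
  | zero => exact hp
  | succ n ih =>
    rw [Function.iterate_succ_apply']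
    rcases ih with h | ⟨i, h1, h2⟩
    · left; show (S.F _).2 = 0; rw [S.F_base h, h]
    · set q := S.f^[n] p
      have hq : q.1 = (S.b i, q.1.2) := Prod.ext h1 rfl
      rcases le_total (2 * q.1.2) (S.l i) with h | h
      · left; show (S.F _).2 = 0; rw [hq, S.F_low i h]
      · right; refine ⟨S.σ i, ?_, by rwa [S.lσ]⟩
        show (S.F _).1 = _; rw [hq, S.F_high i h]

lemma slow_dist (S : StickData) {δ : ℝ} (hδ : 0 ≤ δ) (p : S.D)
    (hp : p.1.2 = 0 ∨ ∃ i, p.1.1 = S.b i ∧ S.l i ≤ δ) (n : ℕ) :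
    dist (S.f^[n] p) p ≤ n * (6 * δ) := by
  induction n with
  | zero => simp
  | succ n ih =>
    have h1 : dist (S.f^[n+1] p) (S.f^[n] p) ≤ 6 * δ := by
      rw [Function.iterate_succ_apply']
      show dist (S.F (S.f^[n] p).1) (S.f^[n] p).1 ≤ _
      rcases S.slow hδ p hp n with h | ⟨i, h, h'⟩
      · rw [S.F_base h]; simp [hδ]
      · have := S.F_disp_len (S.f^[n] p).2 h
        linarith
    have := dist_triangle (S.f^[n+1] p) (S.f^[n] p) p
    push_cast
    linarith

/-- away from the tips, points reach the base in bounded time -/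
lemma fast (S : StickData) {ε : ℝ} {m : ℕ} (hm : 1 < 2 ^ m * ε) (p : S.D) {i : S.ι}
    (hp : p.1.1 = S.b i) (n : ℕ) (h : ε ≤ dist (S.f^[n] p) (S.tip (S.σ^[n] i))) (j : ℕ) (hj : n + m ≤ j) :
    S.f^[j] p = S.f^[n + m] p := by
  have hε : 0 < ε := by
    by_contra hh
    push Not at hh
    have : (2:ℝ) ^ m * ε ≤ 0 := mul_nonpos_of_nonneg_of_nonpos (by positivity) hh
    linarith
  suffices hb : (S.f^[n + m] p).1.2 = 0 by
    obtain ⟨t, rfl⟩ := Nat.exists_eq_add_of_le' hj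
    rw [iterate_add_apply]
    apply Subtype.ext
    rw [f_iter, S.F_iter_base t hb]
  have hpl : p.1.2 = 0 ∨ (0 < p.1.2 ∧ p.1.2 ≤ S.l i) := by
    rcases S.D_cases p.2 with h0 | ⟨j, hj, h0, hl⟩
    · exact Or.inl h0
    · have : i = j := S.binj (hp.symm.trans hj)
      rw [this]; exact Or.inr ⟨h0, hl⟩
  rcases hpl with h0 | ⟨h0, hl⟩
  · rw [f_iter, S.F_iter_base _ h0]; exact h0
  have hpe : p.1 = (S.b i, S.l i - (S.l i - p.1.2)) := Prod.ext hp (by simp)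
  set g := S.l i - p.1.2 with hg
  have hg0 : 0 ≤ g := by linarith
  rw [f_iter, hpe]
  refine (S.F_iter (n + m) i hg0).2 ?_ (by linarith)
  rcases le_total (2 ^ n * g) (S.l i) with h1 | h1
  · have h2 := (S.F_iter n i hg0).1 h1
    rw [← hpe, ← f_iter] at h2
    have h3 : dist (S.f^[n] p) (S.tip (S.σ^[n] i)) = 2 ^ n * g := by
      show dist (S.f^[n] p).1 (S.tip (S.σ^[n] i)).1 = _
      rw [h2, Prod.dist_eq]
      have : 0 ≤ 2 ^ n * g := by positivity
      simp [tip, S.lσn, abs_of_nonneg hg0, this]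
    rw [h3] at h
    have := S.lle i
    rw [pow_add]
    have h4 : (2:ℝ) ^ m * ε ≤ 2 ^ m * (2 ^ n * g) := by gcongr
    linarith
  · refine h1.trans ?_
    gcongr
    · norm_num
    · omega

lemma entropy_zero (S : StickData) : topEntropy S.f = 0 := by
  classical
  have := isCompact_iff_compactSpace.1 S.D_compact
  rw [topEntropy, seqEntropy, seqEntropyOn]
  simp only [ENNReal.iSup_eq_zero]
  rintro U ⟨hUo, hUc⟩
  obtain ⟨ε, hε, hleb⟩ := lebesgue_number_lemma_of_metric_sUnion (isCompact_univ (X := S.D)) hUo hUc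
  choose V hV hVb using fun x => hleb x (mem_univ x)
  obtain ⟨Z, -, hZf, hZ⟩ := Metric.finite_approx_of_totallyBounded
    (isCompact_univ (X := S.D)).totallyBounded (ε / 2) (by positivity)
  have hZ' : ∀ x : S.D, ∃ z : Z, dist x z < ε / 2 := by
    intro x
    have := hZ (mem_univ x)
    simp only [mem_iUnion] at this
    obtain ⟨z, hz, h⟩ := this
    exact ⟨⟨z, hz⟩, h⟩
  choose z hz using hZ'
  have : Fintype Z := hZf.fintype
  set C := Fintype.card Z with hCdef
  have hC : 1 ≤ C := by
    have : Nonempty Z := ⟨z ⟨(0,0), (S.mem_D _).2 (Or.inl (by simp))⟩⟩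
    exact Fintype.card_pos
  obtain ⟨m, hm⟩ : ∃ m : ℕ, 1 < 2 ^ m * ε := by
    obtain ⟨m, hm⟩ := pow_unbounded_of_one_lt (1 / ε) one_lt_two
    exact ⟨m, by rwa [div_lt_iff₀ hε] at hm⟩
  refine le_antisymm ?_ zero_le
  refine ENNReal.le_of_forall_pos_le_add fun η hη _ => ?_
  rw [zero_add]
  have hη' : (0:ℝ) < η := hη
  obtain ⟨k0, hk0⟩ := exists_nat_gt (Real.log C / η)
  set k := k0 + 1 with hk
  have hkpos : (0:ℝ) < k := by positivity
  have hlogk : Real.log C / k < η := by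
    rw [div_lt_iff₀ hη'] at hk0
    rw [div_lt_iff₀ hkpos, hk]; push_cast; nlinarith
  set δ := ε / (2 * (6 * k)) with hδ
  have hδpos : 0 < δ := by positivity
  have hFf := S.lfin δ hδpos
  have : Fintype {i | δ ≤ S.l i} := hFf.fintype
  have hcount : ∀ n, seqCoverCountOn S.f univ id U n ≤
      C ^ (n / k + 1) + (Fintype.card {i | δ ≤ S.l i} * C ^ (m + 1)) * (n + 1) := by
    intro n
    have hcard : C ^ (n / k + 1) + (Fintype.card {i | δ ≤ S.l i} * C ^ (m + 1)) * (n + 1) =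
      Fintype.card ((Fin (n / k + 1) → Z) ⊕ (({i | δ ≤ S.l i} × (Fin (m + 1) → Z)) × Fin (n + 1))) := by
      simp only [Fintype.card_sum, Fintype.card_prod, Fintype.card_pi, Fintype.card_fin,
        Finset.prod_const, Finset.card_univ, hCdef]
    rw [hcard]
    refine count_le _ _ _ _ _ (fun κ j => match κ with
      | Sum.inl w => V (w (Fin.ofNat _ (j / k)))
      | Sum.inr q => if j < q.2.1 then V (S.tip (S.σ^[j] q.1.1)) else
          V (q.1.2 (Fin.ofNat _ (min (j - q.2.1) m)))) ?_ ?_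
    · rintro (w | q) j
      · exact hV _
      · dsimp only; split_ifs <;> exact hV _
    · intro x _
      have hsplit : (x.1.2 = 0 ∨ ∃ i, x.1.1 = S.b i ∧ S.l i ≤ δ) ∨ ∃ i, x.1.1 = S.b i ∧ δ ≤ S.l i := by
        rcases S.D_cases x.2 with h | ⟨i, h, -⟩
        · exact Or.inl (Or.inl h)
        · rcases le_total (S.l i) δ with h' | h'
          · exact Or.inl (Or.inr ⟨i, h, h'⟩)
          · exact Or.inr ⟨i, h, h'⟩
      rcases hsplit with hx | ⟨i, hi, hil⟩
      · refine ⟨Sum.inl fun a => z (S.f^[k * a] x), fun j hj => ?_⟩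
        dsimp only [id]
        apply hVb
        have e1 : ((Fin.ofNat (n / k + 1) (j / k) : Fin _) : ℕ) = j / k := by
          simp only [Fin.val_ofNat]
          exact Nat.mod_eq_of_lt (Nat.lt_succ_of_le (Nat.div_le_div_right hj.le))
        rw [e1, Metric.mem_ball]
        have h1 := hz (S.f^[k * (j / k)] x)
        have h2 := S.slow_dist hδpos.le _ (S.slow hδpos.le x hx (k * (j / k))) (j % k)
        rw [← iterate_add_apply, Nat.mod_add_div] at h2
        have h3 : ((j % k : ℕ) : ℝ) ≤ k := by exact_mod_cast (Nat.mod_lt j (by omega)).le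
        have h4 : ((j % k : ℕ) : ℝ) * (6 * δ) ≤ ε / 2 := by
          calc ((j % k : ℕ) : ℝ) * (6 * δ) ≤ k * (6 * δ) := by gcongr
            _ = ε / 2 := by rw [hδ]; field_simp
        have h5 := dist_triangle (S.f^[j] x) (S.f^[k * (j / k)] x) (z (S.f^[k * (j / k)] x))
        linarith
      · -- fast sticks
        have hs : ∃ s ≤ n, (∀ j < s, dist (S.f^[j] x) (S.tip (S.σ^[j] i)) < ε) ∧
            (s < n → ε ≤ dist (S.f^[s] x) (S.tip (S.σ^[s] i))) := by
          by_cases h : ∃ s < n, ε ≤ dist (S.f^[s] x) (S.tip (S.σ^[s] i))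
          · refine ⟨Nat.find h, (Nat.find_spec h).1.le, fun j hj => ?_, fun _ => (Nat.find_spec h).2⟩
            have h1 := Nat.find_min h hj
            have h2 := (Nat.find_spec h).1
            by_contra h3
            exact h1 ⟨hj.trans h2, not_lt.1 h3⟩
          · push Not at h
            exact ⟨n, le_rfl, h, fun h => absurd h (lt_irrefl _)⟩
        obtain ⟨s, hsn, hs1, hs2⟩ := hs
        refine ⟨Sum.inr ((⟨i, hil⟩, fun a => z (S.f^[s + a] x)), ⟨s, Nat.lt_succ_of_le hsn⟩), fun j hj => ?_⟩
        dsimp only [id]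
        split_ifs with hjs
        · apply hVb
          exact hs1 j hjs
        · apply hVb
          push Not at hjs
          have e1 : ((Fin.ofNat (m + 1) (min (j - s) m) : Fin _) : ℕ) = min (j - s) m := by
            simp only [Fin.val_ofNat]
            exact Nat.mod_eq_of_lt (Nat.lt_succ_of_le (min_le_right _ _))
          rw [e1]
          have e2 : S.f^[j] x = S.f^[s + min (j - s) m] x := by
            rcases le_total (j - s) m with h | h
            · rw [min_eq_left h]; congr 2; omega
            · rw [min_eq_right h]
              exact S.fast hm x hi s (hs2 (by omega)) j (by omega)
          rw [e2, Metric.mem_ball]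
          have := hz (S.f^[s + min (j - s) m] x)
          linarith
  have hfin := entropy_arith C _ k hC (by omega) η hlogk _ hcount
  refine limsup_le_of_le (by isBoundedDefault) ?_
  filter_upwards [hfin] with n hn
  calc ENNReal.ofReal _ ≤ ENNReal.ofReal (η : ℝ) := ENNReal.ofReal_le_ofReal hn
    _ = η := by simp

/-- The independence property gives positive sequence entropy. -/
lemma seq_pos (S : StickData) (Y : Set S.D) (hY : ∀ i, S.tip i ∈ Y)
    (hind : ∀ m : ℕ, 3 ≤ m → ∃ T : (Fin m → Bool) → S.ι, ∀ w (j : Fin m),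
      (w j = true → S.b (S.σ^[2 ^ (m + j.1)] (T w)) < 1 / 3) ∧
      (w j = false → 2 / 3 < S.b (S.σ^[2 ^ (m + j.1)] (T w)))) :
    0 < supSeqEntropyOn S.f Y := by
  classical
  set U0 : Set S.D := {p | p.1.1 < 2 / 3} with hU0
  set U1 : Set S.D := {p | 1 / 3 < p.1.1} with hU1
  have hcov : IsOpenCoverOn Y ({U0, U1} : Finset (Set S.D)) := by
    refine ⟨?_, ?_⟩
    · intro U hU
      simp only [Finset.mem_insert, Finset.mem_singleton] at hU
      rcases hU with rfl | rfl
      · exact isOpen_lt (by fun_prop) continuous_const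
      · exact isOpen_lt continuous_const (by fun_prop)
    · intro p _
      simp only [Finset.coe_insert, Finset.coe_singleton, sUnion_insert, sUnion_singleton, mem_union,
        hU0, hU1, mem_ofPred_eq]
      by_cases h : p.1.1 < 2 / 3
      · exact Or.inl h
      · right; linarith
  have hcount : ∀ m, 3 ≤ m → 2 ^ m ≤ seqCoverCountOn S.f Y (fun i => 2 ^ i) {U0, U1} (2 * m) := by
    intro m hm
    obtain ⟨T, hT⟩ := hind m hm
    refine le_csInf ?_ ?_
    · -- nonempty
      refine ⟨Fintype.card (Fin (2 * m) → ({U0, U1} : Finset (Set S.D))), fun j i =>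
        ((Fintype.equivFin (Fin (2 * m) → ({U0, U1} : Finset (Set S.D)))).symm j i).1, fun j i => Subtype.prop _, ?_⟩
      intro x hx
      have : ∀ i : Fin (2 * m), ∃ V : ({U0, U1} : Finset (Set S.D)), S.f^[2 ^ i.1] x ∈ V.1 := by
        intro i
        by_cases h : (S.f^[2 ^ i.1] x).1.1 < 2 / 3
        · exact ⟨⟨U0, by simp⟩, h⟩
        · refine ⟨⟨U1, by simp⟩, ?_⟩
          show 1 / 3 < (S.f^[2 ^ i.1] x).1.1
          linarith
      choose V hV using this
      refine mem_iUnion.2 ⟨Fintype.equivFin _ V, mem_iInter.2 fun i => ?_⟩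
      simpa using hV i
    · rintro M ⟨c, hc, hcY⟩
      have h1 : ∀ w, ∃ j, ∀ i : Fin (2 * m), S.f^[2 ^ i.1] (S.tip (T w)) ∈ c j i := by
        intro w
        have := hcY (hY (T w))
        simpa using this
      choose J hJ using h1
      have hinj : Function.Injective J := by
        intro w w' hww
        funext j
        have hlt : m + j.1 < 2 * m := by have := j.2; omega
        have a1 := hJ w ⟨m + j.1, hlt⟩
        have a2 := hJ w' ⟨m + j.1, hlt⟩
        rw [← hww] at a2
        have hcc := hc (J w) ⟨m + j.1, hlt⟩
        rw [f_tip] at a1 a2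
        have t1 := hT w j
        have t2 := hT w' j
        simp only [Finset.mem_insert, Finset.mem_singleton] at hcc
        by_contra hne
        have hx : ∀ v, (S.tip v).1.1 = S.b v := fun _ => rfl
        rcases hcc with h | h <;> rw [h] at a1 a2 <;>
          simp only [hU0, hU1, mem_ofPred_eq, hx] at a1 a2 <;>
          cases h1 : w j <;> cases h2 : w' j <;>
          first
          | exact hne (h1.trans h2.symm)
          | (have := t1.1 h1; have := t2.2 h2; linarith)
          | (have := t1.2 h1; have := t2.1 h2; linarith)
      have := Fintype.card_le_of_injective J hinj
      simpa using this
  have hge : ENNReal.ofReal (Real.log 2 / 2) ≤ seqEntropyOn S.f Y (fun i => 2 ^ i) := by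
    refine le_trans ?_ (le_iSup₂ (f := fun (𝒰 : Finset (Set S.D)) (_ : IsOpenCoverOn Y 𝒰) =>
      Filter.limsup (fun n : ℕ => ENNReal.ofReal
        (Real.log (seqCoverCountOn S.f Y (fun i => 2 ^ i) 𝒰 n) / n)) Filter.atTop) _ hcov)
    refine le_limsup_of_frequently_le ?_ (by isBoundedDefault)
    rw [Filter.frequently_atTop]
    intro N
    refine ⟨2 * (N + 3), by omega, ENNReal.ofReal_le_ofReal ?_⟩
    have h := hcount (N + 3) (by omega)
    have h' : (2:ℝ) ^ (N + 3) ≤ seqCoverCountOn S.f Y (fun i => 2 ^ i) {U0, U1} (2 * (N + 3)) := by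
      exact_mod_cast h
    have h'' := Real.log_le_log (by positivity) h'
    rw [Real.log_pow] at h''
    rw [le_div_iff₀ (by positivity)]
    refine le_trans (le_of_eq ?_) h''
    push_cast
    ring
  have hpos : 0 < ENNReal.ofReal (Real.log 2 / 2) := by
    rw [ENNReal.ofReal_pos]
    have := Real.log_pos one_lt_two
    positivity
  refine lt_of_lt_of_le (hpos.trans_le hge) ?_
  rw [supSeqEntropyOn]
  refine le_iSup_of_le (fun i => 2 ^ i) (le_iSup_of_le ?_ (le_iSup_of_le ?_ le_rfl))
  · exact pow_right_strictMono₀ one_lt_two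
  · simp

end StickData

/-- index set for the sticks -/
abbrev Idx : Type := Σ m : ℕ, (Fin m → Bool) × ZMod (4 ^ m)

/-- the rest times at position zero -/
def restSet (m : ℕ) (w : Fin m → Bool) : Set ℝ :=
  {0, 4 ^ m} ∪ {x | ∃ j : Fin m, w j = true ∧ x = 2 ^ (m + j.1)}

/-- position at a time -/
noncomputable def pos (m : ℕ) (w : Fin m → Bool) (x : ℝ) : ℝ :=
  min 1 (Metric.infDist x (restSet m w) / (m + 1))

lemma pos_lip (m : ℕ) (w : Fin m → Bool) (x y : ℝ) : |pos m w x - pos m w y| ≤ |x - y| / (m + 1) := by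
  have h : ∀ x y, pos m w x ≤ pos m w y + |x - y| / (m + 1) := by
    intro x y
    have h1 := Metric.infDist_le_infDist_add_dist (s := restSet m w) (x := x) (y := y)
    rw [Real.dist_eq] at h1
    have h2 : Metric.infDist x (restSet m w) / (m + 1) ≤
        Metric.infDist y (restSet m w) / (m + 1) + |x - y| / (m + 1) := by
      rw [← add_div]; gcongr
    have h3 : 0 ≤ |x - y| / ((m:ℝ) + 1) := by positivity
    unfold pos
    rcases le_total 1 (Metric.infDist y (restSet m w) / (m + 1)) with h | h
    · rw [min_eq_left h]
      have := min_le_left 1 (Metric.infDist x (restSet m w) / ((m:ℝ) + 1))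
      linarith
    · rw [min_eq_right h]
      exact (min_le_right _ _).trans h2
  rw [abs_le]
  have h1 := h x y
  have h2 := h y x
  rw [abs_sub_comm y x] at h2
  constructor <;> linarith

lemma pos_zero {m : ℕ} {w : Fin m → Bool} {x : ℝ} (h : x ∈ restSet m w) : pos m w x = 0 := by
  simp [pos, Metric.infDist_zero_of_mem h]

lemma pos_mem (m : ℕ) (w : Fin m → Bool) (x : ℝ) : 0 ≤ pos m w x ∧ pos m w x ≤ 1 := by
  refine ⟨le_min zero_le_one (div_nonneg Metric.infDist_nonneg (by positivity)), min_le_left _ _⟩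

lemma pos_step (m : ℕ) (w : Fin m → Bool) (t : ZMod (4 ^ m)) :
    |pos m w ((t + 1).val : ℝ) - pos m w (t.val : ℝ)| ≤ 1 / (m + 1) := by
  have : NeZero (4 ^ m) := ⟨by positivity⟩
  have hlt := ZMod.val_lt t
  by_cases h : t.val + 1 < 4 ^ m
  · have : (t + 1).val = t.val + 1 := by
      have := ZMod.val_natCast_of_lt h
      simpa using this
    rw [this]
    have := pos_lip m w ((t.val + 1 : ℕ) : ℝ) (t.val : ℝ)
    simpa using this
  · have he : t.val + 1 = 4 ^ m := by omega
    have h0 : t + 1 = 0 := by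
      have : ((t.val + 1 : ℕ) : ZMod (4 ^ m)) = 0 := by rw [he]; exact ZMod.natCast_self _
      simpa using this
    have e1 : pos m w (((t + 1).val : ℕ) : ℝ) = pos m w ((4:ℝ) ^ m) := by
      rw [h0, ZMod.val_zero, Nat.cast_zero, pos_zero (by simp [restSet]), pos_zero (by simp [restSet])]
    rw [e1]
    have e2 : ((4:ℝ) ^ m) = ((t.val + 1 : ℕ) : ℝ) := by rw [he]; simp
    rw [e2]
    have := pos_lip m w ((t.val + 1 : ℕ) : ℝ) (t.val : ℝ)
    simpa using this

lemma two_pow_gap {a b m : ℕ} (ha : m ≤ a) (hb : m ≤ b) (hab : a ≠ b) :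
    ((m:ℝ) + 1) ≤ |(2:ℝ) ^ a - 2 ^ b| := by
  wlog h : a < b generalizing a b
  · rw [abs_sub_comm]; exact this hb ha hab.symm (by omega)
  have h1 : (2:ℝ) ^ (a + 1) ≤ 2 ^ b := pow_le_pow_right₀ (by norm_num) h
  have h2 : (2:ℝ) ^ m ≤ 2 ^ a := pow_le_pow_right₀ (by norm_num) ha
  have h3 : (m:ℝ) + 1 ≤ 2 ^ m := by exact_mod_cast Nat.lt_two_pow_self (n := m)
  rw [pow_succ] at h1
  rw [abs_sub_comm, abs_of_nonneg] <;> linarith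

lemma pos_one {m : ℕ} {w : Fin m → Bool} {j : Fin m} (h : w j = false) :
    pos m w (2 ^ (m + j.1)) = 1 := by
  unfold pos
  rw [min_eq_left]
  rw [one_le_div (by positivity), Metric.le_infDist ⟨0, by simp [restSet]⟩]
  intro y hy
  rw [Real.dist_eq]
  have hj := j.2
  rcases hy with (rfl | rfl) | ⟨i, hi, rfl⟩
  · have h2 : (2:ℝ) ^ m ≤ 2 ^ (m + j.1) := pow_le_pow_right₀ (by norm_num) (by omega)
    have h3 : (m:ℝ) + 1 ≤ 2 ^ m := by exact_mod_cast Nat.lt_two_pow_self (n := m)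
    rw [sub_zero, abs_of_nonneg (by positivity)]; linarith
  · have : (4:ℝ) ^ m = 2 ^ (2 * m) := by rw [pow_mul]; norm_num
    rw [this]
    exact two_pow_gap (by omega) (by omega) (by omega)
  · refine two_pow_gap (by omega) (by omega) ?_
    intro he
    have : j = i := Fin.ext (by omega)
    rw [this, hi] at h
    exact absurd h (by simp)

instance idxCountable : Countable Idx := by
  have : ∀ m : ℕ, NeZero (4 ^ m) := fun m => ⟨by positivity⟩
  have : ∀ m : ℕ, Countable (ZMod (4 ^ m)) := fun m => inferInstance
  infer_instance

/-- unperturbed base position -/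
noncomputable def basePos (i : Idx) : ℝ := pos i.1 i.2.1 (i.2.2.val : ℝ)

/-- level scale -/
noncomputable def lev (i : Idx) : ℝ := 1 / ((i.1 : ℝ) + 1)

lemma lev_pos (i : Idx) : 0 < lev i := by unfold lev; positivity

/-- cyclic shift -/
def shift (i : Idx) : Idx := ⟨i.1, i.2.1, i.2.2 + 1⟩

lemma shift_iter (n : ℕ) (i : Idx) : shift^[n] i = ⟨i.1, i.2.1, i.2.2 + n⟩ := by
  induction n with
  | zero => simp
  | succ n ih =>
    rw [Function.iterate_succ_apply', ih]
    simp [shift, add_assoc]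

lemma exists_inj : ∃ b : Idx → ℝ, Function.Injective b ∧ ∀ i, basePos i ≤ b i ∧ b i ≤ basePos i + lev i := by
  obtain ⟨e, he⟩ := exists_injective_nat Idx
  set c : Idx → ℝ := fun i => 1 / ((Nat.pair i.1 (e i) : ℝ) + 1) with hc
  have hcinj : ∀ i j, i ≠ j → c i ≠ c j := by
    intro i j hij h
    simp only [hc] at h
    rw [div_eq_div_iff (by positivity) (by positivity)] at h
    have h' : (Nat.pair i.1 (e i) : ℝ) = Nat.pair j.1 (e j) := by linarith
    have h'' : Nat.pair i.1 (e i) = Nat.pair j.1 (e j) := by exact_mod_cast h'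
    exact hij (he (Nat.pair_eq_pair.1 h'').2)
  have hcle : ∀ i, c i ≤ lev i := by
    intro i
    simp only [hc, lev]
    have : (i.1 : ℝ) ≤ Nat.pair i.1 (e i) := by exact_mod_cast Nat.left_le_pair _ _
    gcongr
  have hcpos : ∀ i, 0 < c i := fun i => by simp only [hc]; positivity
  have hbad : (range fun p : Idx × Idx => (basePos p.2 - basePos p.1) / (c p.1 - c p.2)).Countable :=
    countable_range _
  have : ¬ (Ioo (0:ℝ) 1 ⊆ range fun p : Idx × Idx => (basePos p.2 - basePos p.1) / (c p.1 - c p.2)) := by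
    intro hs
    exact absurd (Cardinal.Real.Ioo_countable_iff.1 (hbad.mono hs)) (by norm_num)
  obtain ⟨t, ht, htb⟩ := not_subset.1 this
  refine ⟨fun i => basePos i + t * c i, ?_, fun i => ?_⟩
  · intro i j h
    by_contra hij
    apply htb
    refine ⟨(i, j), ?_⟩
    have h1 : c i - c j ≠ 0 := sub_ne_zero.2 (hcinj i j hij)
    dsimp only at h ⊢
    rw [div_eq_iff h1]; linarith
  · have h1 := hcpos i
    have h2 := hcle i
    have h3 := ht.1
    have h4 := ht.2
    constructor <;> nlinarith

lemma exists_data : ∃ S : StickData, ∀ m : ℕ, 3 ≤ m → ∃ T : (Fin m → Bool) → S.ι, ∀ w (j : Fin m),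
      (w j = true → S.b (S.σ^[2 ^ (m + j.1)] (T w)) < 1 / 3) ∧
      (w j = false → 2 / 3 < S.b (S.σ^[2 ^ (m + j.1)] (T w))) := by
  obtain ⟨b, hb, hb'⟩ := exists_inj
  have hNZ : ∀ m : ℕ, NeZero (4 ^ m) := fun m => ⟨by positivity⟩
  have hle1 : ∀ i, lev i ≤ 1 := by
    intro i; unfold lev
    rw [div_le_one (by positivity)]
    linarith [i.1.cast_nonneg (α := ℝ)]
  refine ⟨{ ι := Idx, cnt := inferInstance, b := b, l := lev, σ := shift, binj := hb,
            b0 := fun i => (pos_mem _ _ _).1.trans (hb' i).1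
            b2 := fun i => ?_
            lpos := lev_pos
            lle := hle1
            lfin := fun δ hδ => ?_
            lσ := fun i => rfl
            disp := fun i => ?_
            per := fun i => ⟨4 ^ i.1, by positivity, ?_⟩ }, ?_⟩
  · have h1 : basePos i ≤ 1 := (pos_mem _ _ _).2
    have := (hb' i).2
    have := hle1 i
    linarith
  · obtain ⟨n, hn⟩ := exists_nat_one_div_lt hδ
    have hf : (⋃ m ∈ Iio n, range (Sigma.mk (β := fun m => (Fin m → Bool) × ZMod (4 ^ m)) m)).Finite :=
      (finite_Iio n).biUnion fun m _ => finite_range _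
    refine hf.subset ?_
    rintro ⟨m, x⟩ hi
    simp only [mem_iUnion]
    refine ⟨m, ?_, x, rfl⟩
    by_contra hmn
    simp only [mem_Iio, not_lt] at hmn
    have hi' : δ ≤ 1 / ((m:ℝ) + 1) := hi
    have : 1 / ((m:ℝ) + 1) ≤ 1 / ((n:ℝ) + 1) := by
      have : (n:ℝ) ≤ m := by exact_mod_cast hmn
      gcongr
    linarith
  · have h1 : |basePos (shift i) - basePos i| ≤ lev i := pos_step i.1 i.2.1 i.2.2
    have h2 := hb' i
    have h3 := hb' (shift i)
    have h4 : lev (shift i) = lev i := rfl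
    rw [h4] at h3
    have := lev_pos i
    rw [abs_le] at h1 ⊢
    constructor <;> linarith
  · rw [shift_iter]
    have : ((4 ^ i.1 : ℕ) : ZMod (4 ^ i.1)) = 0 := ZMod.natCast_self _
    rw [this, add_zero]
  · intro m hm
    refine ⟨fun w => (⟨m, w, 0⟩ : Idx), fun w j => ?_⟩
    have hj := j.2
    have hval : ((0 : ZMod (4 ^ m)) + ((2 ^ (m + j.1) : ℕ) : ZMod (4 ^ m))).val = 2 ^ (m + j.1) := by
      rw [zero_add]
      apply ZMod.val_natCast_of_lt
      have : 4 ^ m = 2 ^ (2 * m) := by rw [pow_mul]; norm_num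
      rw [this]
      exact Nat.pow_lt_pow_right (by norm_num) (by omega)
    have hit : shift^[2 ^ (m + j.1)] (⟨m, w, 0⟩ : Idx) =
      ⟨m, w, 0 + ((2 ^ (m + j.1) : ℕ) : ZMod (4 ^ m))⟩ := shift_iter _ _
    have hbp : basePos (shift^[2 ^ (m + j.1)] (⟨m, w, 0⟩ : Idx)) = pos m w (2 ^ (m + j.1)) := by
      rw [hit]
      show pos m w (((0 : ZMod (4 ^ m)) + ((2 ^ (m + j.1) : ℕ) : ZMod (4 ^ m))).val : ℝ) = _
      rw [hval]; push_cast; rfl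
    have hlev : lev (shift^[2 ^ (m + j.1)] (⟨m, w, 0⟩ : Idx)) ≤ 1 / 4 := by
      rw [hit]
      show 1 / ((m:ℝ) + 1) ≤ 1 / 4
      have : (3:ℝ) ≤ m := by exact_mod_cast hm
      apply one_div_le_one_div_of_le <;> linarith
    have hB := hb' (shift^[2 ^ (m + j.1)] (⟨m, w, 0⟩ : Idx))
    rw [hbp] at hB
    constructor
    · intro hw
      rw [pos_zero (Or.inr ⟨j, hw, rfl⟩)] at hB
      show b _ < _
      linarith
    · intro hw
      rw [pos_one hw] at hB
      show _ < b _
      linarith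

/-- There is a dendrite map with zero topological entropy, every point
periodic or eventually periodic, `Ω(f) = P(f)`, positive supremum of sequence entropies on
`Ω(f)` (hence on the whole space), and without Li–Yorke pairs (hence not Li–Yorke chaotic). -/
theorem exists_dendrite_counterexample :
    ∃ (D : Set (ℝ × ℝ)) (f : D → D), IsDendrite D ∧ Continuous f ∧
      topEntropy f = 0 ∧
      (∀ x : D, ∃ k : ℕ, f^[k] x ∈ Function.periodicPts f) ∧
      nonWanderingSet f = Function.periodicPts f ∧
      0 < supSeqEntropyOn f (nonWanderingSet f) ∧
      0 < supSeqEntropy f ∧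
      (∀ x y : D, ¬ LiYorkePair f x y) ∧
      ¬ ∃ S : Set D, ¬ S.Countable ∧ ∀ x ∈ S, ∀ y ∈ S, x ≠ y → LiYorkePair f x y := by
  obtain ⟨S, hS⟩ := exists_data
  have hLY := no_LY S.f S.ev_per
  refine ⟨S.D, S.f, S.D_dendrite, S.f_cont, S.entropy_zero, S.ev_per, S.nonwand, ?_, ?_, hLY, ?_⟩
  · rw [S.nonwand]
    exact S.seq_pos _ (fun i => S.tip_per (i := i) rfl) hS
  · exact S.seq_pos _ (fun i => mem_univ _) hS
  · rintro ⟨T, hT, h⟩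
    apply hT
    have : T.Subsingleton := by
      intro x hx y hy
      by_contra hne
      exact hLY x y (h x hx y hy hne)
    exact this.countable
end

section
/- Let (X,f) be a dynamical system on a compact metric space. Then h_∞(f) > 0 if and only if there exists an IN-pair (x,y) of (X,f) with x ≠ y, i.e. IN(X,f) \ Δ_X ≠ ∅, where Δ_X = {(x,x) : x ∈ X}. -/
open Set Filter Topology Function
open scoped ENNReal

open Classical in
/-- finite sets of indices shattered by `E` -/
noncomputable def shatSets {P ι : Type*} [Fintype ι] (A B : ι → Set P) (E : Finset P) :
    Finset (Finset ι) :=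
  Finset.univ.filter fun S => ∀ σ : ι → Bool, ∃ p ∈ E, ∀ i ∈ S, p ∈ (if σ i then A i else B i)

open Classical in
lemma shat_pigeon {P ι : Type*} [Fintype ι] (A B : ι → Set P) (E : Finset P) (h2 : 2 ≤ E.card)
    (hsep : ∀ p ∈ E, ∀ q ∈ E, p ≠ q → ∃ i, (p ∈ A i ∧ q ∈ B i) ∨ (q ∈ A i ∧ p ∈ B i)) :
    ∃ i, E.card ^ 2 ≤ 4 * Fintype.card ι *
      ((E.filter (· ∈ A i)).card * (E.filter (· ∈ B i)).card) := by
  by_contra! hcon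
  have hsub : E.offDiag ⊆ Finset.univ.biUnion (fun i : ι =>
      ((E.filter (· ∈ A i)) ×ˢ (E.filter (· ∈ B i))) ∪
      ((E.filter (· ∈ B i)) ×ˢ (E.filter (· ∈ A i)))) := by
    rintro ⟨p, q⟩ h
    simp only [Finset.mem_offDiag] at h
    obtain ⟨hp, hq, hne⟩ := h
    obtain ⟨i, hi⟩ := hsep p hp q hq hne
    simp only [Finset.mem_biUnion, Finset.mem_univ, true_and, Finset.mem_union,
      Finset.mem_product, Finset.mem_filter]
    exact ⟨i, by tauto⟩
  have h1 := (Finset.card_le_card hsub).trans Finset.card_biUnion_le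
  rw [Finset.offDiag_card] at h1
  have h3 : ∑ i : ι, (((E.filter (· ∈ A i)) ×ˢ (E.filter (· ∈ B i))) ∪
      ((E.filter (· ∈ B i)) ×ˢ (E.filter (· ∈ A i)))).card ≤
      ∑ i : ι, 2 * ((E.filter (· ∈ A i)).card * (E.filter (· ∈ B i)).card) := by
    apply Finset.sum_le_sum
    intro i _
    refine (Finset.card_union_le _ _).trans ?_
    rw [Finset.card_product, Finset.card_product]
    apply le_of_eq; ring
  have h4 : 2 * E.card ≤ E.card * E.card := Nat.mul_le_mul_right _ h2
  have h5 : E.card ^ 2 ≤ 2 * ∑ i : ι, 2 * ((E.filter (· ∈ A i)).card * (E.filter (· ∈ B i)).card) := by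
    have := h1.trans h3
    have h6 : E.card ^ 2 = E.card * E.card := sq _
    omega
  rcases isEmpty_or_nonempty ι with hE | hN
  · simp at h5; simp [h5] at h2
  · have hlt : ∑ i : ι, 4 * Fintype.card ι *
      ((E.filter (· ∈ A i)).card * (E.filter (· ∈ B i)).card) < ∑ i : ι, E.card ^ 2 :=
      Finset.sum_lt_sum_of_nonempty Finset.univ_nonempty (fun i _ => hcon i)
    rw [← Finset.mul_sum] at hlt h5
    simp only [Finset.sum_const, Finset.card_univ, smul_eq_mul] at hlt
    have := Nat.mul_le_mul_left (Fintype.card ι) h5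
    nlinarith

open Classical in
lemma shat_lower {P ι : Type*} [Fintype ι] (A B : ι → Set P) (hd : ∀ i, Disjoint (A i) (B i))
    (C : ℕ) (hC : 4 * Fintype.card ι ≤ C) (hC2 : 2 ≤ C) (k : ℕ) :
    ∀ (E : Finset P) (_ : C ^ k ≤ E.card)
    (_ : ∀ p ∈ E, ∀ q ∈ E, p ≠ q → ∃ i, (p ∈ A i ∧ q ∈ B i) ∨ (q ∈ A i ∧ p ∈ B i)),
    2 ^ k ≤ (shatSets A B E).card := by
  induction k with
  | zero =>
    intro E hE _
    simp only [pow_zero] at hE ⊢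
    obtain ⟨p, hp⟩ := Finset.card_pos.1 hE
    apply Finset.card_pos.2
    refine ⟨∅, ?_⟩
    simp only [shatSets, Finset.mem_filter, Finset.mem_univ, true_and]
    intro σ
    exact ⟨p, hp, by simp⟩
  | succ k ih =>
    intro E hE hsep
    have hCk : 0 < C ^ k := by positivity
    have h2 : 2 ≤ E.card := by
      rw [pow_succ] at hE; nlinarith
    obtain ⟨i, hi⟩ := shat_pigeon A B E h2 hsep
    set E1 := E.filter (· ∈ A i) with hE1
    set E2 := E.filter (· ∈ B i) with hE2
    have s1 : E1 ⊆ E := Finset.filter_subset _ _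
    have s2 : E2 ⊆ E := Finset.filter_subset _ _
    have c1 : E1.card ≤ E.card := Finset.card_le_card s1
    have c2 : E2.card ≤ E.card := Finset.card_le_card s2
    have b1 : E.card ≤ C * E1.card := by
      refine Nat.le_of_mul_le_mul_right (c := E.card) ?_ (by omega)
      calc E.card * E.card = E.card ^ 2 := (sq _).symm
        _ ≤ _ := hi
        _ ≤ C * (E1.card * E.card) := by gcongr
        _ = _ := by ring
    have b2 : E.card ≤ C * E2.card := by
      refine Nat.le_of_mul_le_mul_right (c := E.card) ?_ (by omega)
      calc E.card * E.card = E.card ^ 2 := (sq _).symm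
        _ ≤ _ := hi
        _ ≤ C * (E.card * E2.card) := by gcongr
        _ = _ := by ring
    have d1 : C ^ k ≤ E1.card := by
      refine Nat.le_of_mul_le_mul_left (c := C) ?_ (by omega)
      calc C * C ^ k = C ^ (k+1) := by ring
        _ ≤ _ := hE.trans b1
    have d2 : C ^ k ≤ E2.card := by
      refine Nat.le_of_mul_le_mul_left (c := C) ?_ (by omega)
      calc C * C ^ k = C ^ (k+1) := by ring
        _ ≤ _ := hE.trans b2
    have t1 := ih E1 d1 (fun p hp q hq => hsep p (s1 hp) q (s1 hq))
    have t2 := ih E2 d2 (fun p hp q hq => hsep p (s2 hp) q (s2 hq))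
    have n1 : ∀ S ∈ shatSets A B E1, i ∉ S := by
      intro S hS hiS
      simp only [shatSets, Finset.mem_filter, Finset.mem_univ, true_and] at hS
      obtain ⟨p, hp, h⟩ := hS (fun _ => false)
      have h3 := h i hiS
      simp only [hE1, Finset.mem_filter] at hp
      simp at h3
      exact Set.disjoint_left.1 (hd i) hp.2 h3
    have u : shatSets A B E1 ∪ shatSets A B E2 ⊆ shatSets A B E := by
      intro S hS
      simp only [shatSets, Finset.mem_union, Finset.mem_filter, Finset.mem_univ, true_and] at hS ⊢
      intro σ
      rcases hS with hS | hS
      · obtain ⟨p, hp, h⟩ := hS σ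
        exact ⟨p, s1 hp, h⟩
      · obtain ⟨p, hp, h⟩ := hS σ
        exact ⟨p, s2 hp, h⟩
    have v : (shatSets A B E1 ∩ shatSets A B E2).image (insert i) ⊆ shatSets A B E := by
      intro S hS
      simp only [Finset.mem_image, Finset.mem_inter] at hS
      obtain ⟨S, ⟨h1, h2⟩, rfl⟩ := hS
      simp only [shatSets, Finset.mem_filter, Finset.mem_univ, true_and] at h1 h2 ⊢
      intro σ
      cases hσ : σ i
      · obtain ⟨p, hp, h⟩ := h2 σ
        refine ⟨p, s2 hp, ?_⟩
        intro j hj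
        rcases Finset.mem_insert.1 hj with rfl | hj
        · simpa [hσ] using (Finset.mem_filter.1 hp).2
        · exact h j hj
      · obtain ⟨p, hp, h⟩ := h1 σ
        refine ⟨p, s1 hp, ?_⟩
        intro j hj
        rcases Finset.mem_insert.1 hj with rfl | hj
        · simpa [hσ] using (Finset.mem_filter.1 hp).2
        · exact h j hj
    have n2 : ∀ S ∈ shatSets A B E2, i ∉ S := by
      intro S hS hiS
      simp only [shatSets, Finset.mem_filter, Finset.mem_univ, true_and] at hS
      obtain ⟨p, hp, h⟩ := hS (fun _ => true)
      have h3 := h i hiS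
      simp only [hE2, Finset.mem_filter] at hp
      simp at h3
      exact Set.disjoint_left.1 (hd i) h3 hp.2
    have hdis : Disjoint (shatSets A B E1 ∪ shatSets A B E2)
        ((shatSets A B E1 ∩ shatSets A B E2).image (insert i)) := by
      rw [Finset.disjoint_left]
      intro S hS hS'
      simp only [Finset.mem_image] at hS'
      obtain ⟨S, _, rfl⟩ := hS'
      rcases Finset.mem_union.1 hS with h | h
      · exact n1 _ h (Finset.mem_insert_self _ _)
      · exact n2 _ h (Finset.mem_insert_self _ _)
    have hinj : ((shatSets A B E1 ∩ shatSets A B E2).image (insert i)).card =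
        (shatSets A B E1 ∩ shatSets A B E2).card := by
      apply Finset.card_image_of_injOn
      intro S hS T hT hST
      have hS := n1 S (Finset.mem_inter.1 hS).1
      have hT := n1 T (Finset.mem_inter.1 hT).1
      have := congrArg (fun R => Finset.erase R i) hST
      simpa [Finset.erase_insert hS, Finset.erase_insert hT] using this
    have := Finset.card_le_card (Finset.union_subset u v)
    rw [Finset.card_union_of_disjoint hdis, hinj, Finset.card_union_add_card_inter] at this
    rw [pow_succ]; omega

lemma shat_upper {P ι : Type*} [Fintype ι] (A B : ι → Set P) (E : Finset P) (D : ℕ)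
    (h : ∀ S ∈ shatSets A B E, S.card ≤ D) :
    (shatSets A B E).card ≤ (Fintype.card ι + 1) ^ D := by
  classical
  have hsub : shatSets A B E ⊆
      (Finset.range (D+1)).biUnion (fun k => Finset.powersetCard k Finset.univ) := by
    intro S hS
    simp only [Finset.mem_biUnion, Finset.mem_range, Finset.mem_powersetCard]
    exact ⟨S.card, Nat.lt_succ_of_le (h S hS), Finset.subset_univ _, rfl⟩
  refine (Finset.card_le_card hsub).trans (Finset.card_biUnion_le.trans ?_)
  rw [add_pow]
  apply Finset.sum_le_sum
  intro k hk
  rw [Finset.card_powersetCard, Finset.card_univ, one_pow, mul_one]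
  have : 1 ≤ D.choose k := Nat.choose_pos (by simp at hk; omega)
  calc _ ≤ Fintype.card ι ^ k := Nat.choose_le_pow _ _
    _ ≤ _ := Nat.le_mul_of_pos_right _ this

lemma sep_bound {P ι : Type*} [Fintype ι] (A B : ι → Set P) (hd : ∀ i, Disjoint (A i) (B i))
    (E : Finset P) (D : ℕ)
    (hsep : ∀ p ∈ E, ∀ q ∈ E, p ≠ q → ∃ i, (p ∈ A i ∧ q ∈ B i) ∨ (q ∈ A i ∧ p ∈ B i))
    (h : ∀ S ∈ shatSets A B E, S.card ≤ D) :
    E.card ≤ (4 * Fintype.card ι + 2) ^ ((Nat.log 2 (Fintype.card ι + 1) + 1) * D + 1) := by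
  by_contra! hcon
  have h1 := shat_lower A B hd (4 * Fintype.card ι + 2) (by omega) (by omega) _ E hcon.le hsep
  have h2 := shat_upper A B E D h
  have h3 : (Fintype.card ι + 1) ^ D ≤ (2 ^ (Nat.log 2 (Fintype.card ι + 1) + 1)) ^ D :=
    Nat.pow_le_pow_left (Nat.lt_pow_succ_log_self (by norm_num) _).le _
  rw [← pow_mul] at h3
  have := (Nat.pow_lt_pow_succ (a := 2) (n := (Nat.log 2 (Fintype.card ι + 1) + 1) * D)
    (by norm_num))
  omega

lemma growth (L D : ℕ) :
    Tendsto (fun n : ℕ => Real.log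
      (((4 * (n * L) + 2) ^ ((Nat.log 2 (n * L + 1) + 1) * D + 1) : ℕ) : ℝ) / n) atTop (𝓝 0) := by
  have hl : ∀ k : ℕ, Tendsto (fun n : ℕ => (Real.log n) ^ k / n) atTop (𝓝 0) := fun k =>
    ((Real.isLittleO_pow_log_id_atTop (n := k)).tendsto_div_nhds_zero).comp tendsto_natCast_atTop_atTop
  set c : ℝ := Real.log (4 * L + 2)
  have hc : 0 ≤ c := Real.log_nonneg (by have : (0:ℝ) ≤ L := by positivity
                                         linarith)
  set b : ℝ := 1 / Real.log 2
  have hb : 0 ≤ b := by positivity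
  -- bound : (D * (b*(t+c)+1)+1) * (t+c)
  have hlim : Tendsto (fun n : ℕ => (D * b) * ((Real.log n) ^ 2 / n) +
      (2 * D * b * c + D + 1) * ((Real.log n) ^ 1 / n) +
      (D * b * c^2 + D * c + c) * ((Real.log n) ^ 0 / n)) atTop (𝓝 0) := by
    have := (((hl 2).const_mul (D * b)).add ((hl 1).const_mul (2 * D * b * c + D + 1))).add
      ((hl 0).const_mul (D * b * c^2 + D * c + c))
    simpa using this
  refine squeeze_zero' (Eventually.of_forall fun n => ?_) ?_ hlim
  · exact div_nonneg (Real.log_natCast_nonneg _) (by positivity)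
  · filter_upwards [eventually_ge_atTop 1] with n hn
    have hn1 : (1:ℝ) ≤ n := by exact_mod_cast hn
    have hL : (0:ℝ) ≤ L := by positivity
    have hnL : (0:ℝ) ≤ n * L := by positivity
    have e1 : Real.log (4 * (n * L) + 2) ≤ Real.log n + c := by
      rw [← Real.log_mul (by positivity) (by positivity)]
      apply Real.log_le_log (by positivity)
      nlinarith
    have e2 : (Nat.log 2 (n * L + 1) : ℝ) ≤ b * (Real.log n + c) := by
      have h1 : (2:ℝ) ^ (Nat.log 2 (n * L + 1)) ≤ n * L + 1 := by
        exact_mod_cast Nat.pow_log_le_self 2 (Nat.succ_ne_zero _)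
      have h2 := Real.log_le_log (by positivity) h1
      rw [Real.log_pow] at h2
      have h3 : Real.log (n * L + 1) ≤ Real.log (4 * (n * L) + 2) :=
        Real.log_le_log (by positivity) (by linarith)
      have h4 : (0:ℝ) < Real.log 2 := Real.log_pos (by norm_num)
      simp only [b]
      rw [one_div, inv_mul_eq_div, le_div_iff₀ h4]
      linarith
    have hn0 : (0:ℝ) < n := by linarith
    push_cast
    rw [Real.log_pow]
    push_cast
    have ht : 0 ≤ Real.log n := Real.log_nonneg hn1
    have e3 : (((Nat.log 2 (n * L + 1) : ℝ) + 1) * D + 1) * Real.log (4 * (n * L) + 2) ≤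
      ((b * (Real.log n + c) + 1) * D + 1) * (Real.log n + c) := by
      have : 0 ≤ Real.log (4 * (n * L) + 2) := Real.log_nonneg (by linarith)
      gcongr
    calc _ ≤ ((b * (Real.log n + c) + 1) * D + 1) * (Real.log n + c) / n := by gcongr
      _ = _ := by ring

lemma count_bound {X : Type*} [MetricSpace X] [CompactSpace X] (f : X → X)
    (hno : ∀ x y : X, INPair f x y → x = y) (a : ℕ → ℕ) (ha : StrictMono a)
    (𝒰 : Finset (Set X)) (hU : IsOpenCoverOn Set.univ 𝒰) :
    ∃ L D : ℕ, ∀ n, seqCoverCountOn f Set.univ a 𝒰 n ≤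
      (4 * (n * L) + 2) ^ ((Nat.log 2 (n * L + 1) + 1) * D + 1) := by
  classical
  obtain ⟨δ, hδ, hleb⟩ := lebesgue_number_lemma_of_metric_sUnion (isCompact_univ (X := X)) hU.1 hU.2
  have hK : IsCompact {z : X × X | δ ≤ dist z.1 z.2} :=
    (isClosed_le continuous_const (continuous_fst.dist continuous_snd)).isCompact
  have hloc : ∀ z : X × X, ∃ (U V : Set X) (m : ℕ), z.1 ≠ z.2 →
      U ∈ 𝓝 z.1 ∧ V ∈ 𝓝 z.2 ∧ Disjoint U V ∧ ∀ I : Finset ℕ, IsIndepSetPair f U V I → I.card ≤ m := by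
    rintro ⟨x, y⟩
    by_cases hxy : x = y
    · exact ⟨∅, ∅, 0, fun h => absurd hxy h⟩
    have h1 : ¬ INPair f x y := fun h => hxy (hno x y h)
    simp only [INPair] at h1
    push Not at h1
    obtain ⟨U, hU, V, hV, m, hm⟩ := h1
    obtain ⟨u, v, hu, hv, hxu, hyv, huv⟩ := t2_separation hxy
    refine ⟨U ∩ u, V ∩ v, m, fun _ => ⟨inter_mem hU (hu.mem_nhds hxu), inter_mem hV (hv.mem_nhds hyv),
      huv.mono inter_subset_right inter_subset_right, fun I hI => ?_⟩⟩
    by_contra! hlt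
    refine hm I hlt.le ?_
    intro J hJ hJn s
    refine (hI J hJ hJn s).mono ?_
    refine iInter₂_mono fun j _ => preimage_mono ?_
    split_ifs <;> exact inter_subset_left
  choose U V m hUV using hloc
  have hne : ∀ z ∈ {z : X × X | δ ≤ dist z.1 z.2}, z.1 ≠ z.2 := by
    intro z hz h
    simp only [mem_ofPred_eq, h, dist_self] at hz
    linarith
  obtain ⟨T, hTK, hT⟩ := hK.elim_nhds_subcover (fun z => U z ×ˢ V z) (fun z hz =>
    prod_mem_nhds (hUV z (hne z hz)).1 (hUV z (hne z hz)).2.1)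
  refine ⟨T.card, ∑ z ∈ T, m z, fun n => ?_⟩
  set Bd := (4 * (n * T.card) + 2) ^ ((Nat.log 2 (n * T.card + 1) + 1) * (∑ z ∈ T, m z) + 1)
  let Sep : Finset X → Prop := fun E => ∀ p ∈ E, ∀ q ∈ E, p ≠ q →
    ∃ i : Fin n, δ ≤ dist (f^[a i] p) (f^[a i] q)
  have hbd : ∀ E, Sep E → E.card ≤ Bd := by
    intro E hE
    have := sep_bound (ι := Fin n × T) (fun w => f^[a w.1] ⁻¹' (U w.2)) (fun w => f^[a w.1] ⁻¹' (V w.2))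
      (fun w => ((hUV _ (hne _ (hTK _ w.2.2))).2.2.1).preimage _) E (∑ z ∈ T, m z) ?_ ?_
    · simpa [Bd] using this
    · intro p hp q hq hpq
      obtain ⟨i, hi⟩ := hE p hp q hq hpq
      have h1 := hT (show (f^[a i] p, f^[a i] q) ∈ _ from hi)
      simp only [mem_iUnion] at h1
      obtain ⟨z, hz, h2⟩ := h1
      exact ⟨(i, ⟨z, hz⟩), Or.inl h2⟩
    · intro S hS
      simp only [shatSets, Finset.mem_filter, Finset.mem_univ, true_and] at hS
      rw [Finset.card_eq_sum_card_fiberwise (f := fun w => (w.2 : X × X)) (t := T)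
        (fun w _ => w.2.2)]
      apply Finset.sum_le_sum
      intro z hz
      set F := S.filter (fun w => (w.2 : X × X) = z)
      have hcard : (F.image (fun w => a w.1)).card = F.card := by
        apply Finset.card_image_of_injOn
        intro w hw w' hw' h
        have h1 := (Finset.mem_filter.1 hw).2
        have h2 := (Finset.mem_filter.1 hw').2
        exact Prod.ext (Fin.ext (ha.injective h)) (Subtype.ext (h1.trans h2.symm))
      rw [← hcard]
      refine (hUV z (hne z (hTK z hz))).2.2.2 _ ?_
      intro J hJ _ s
      obtain ⟨p, _, hp⟩ := hS (fun w => s (a w.1))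
      refine ⟨p, mem_iInter₂.2 fun j hj => ?_⟩
      obtain ⟨w, hw, rfl⟩ := Finset.mem_image.1 (hJ hj)
      have h1 := hp w (Finset.mem_filter.1 hw).1
      rw [(Finset.mem_filter.1 hw).2] at h1
      cases hs : s (a w.1) <;> simpa [hs] using h1
  -- a maximal separated set
  obtain ⟨E, hE, hmax⟩ : ∃ E, Sep E ∧ ∀ E', Sep E' → E'.card ≤ E.card := by
    have hex : ∃ k, ∃ E, Sep E ∧ E.card = k := ⟨0, ∅, by simp [Sep], rfl⟩
    have hb : ∀ k, (∃ E, Sep E ∧ E.card = k) → k ≤ Bd := by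
      rintro k ⟨E, h, rfl⟩; exact hbd E h
    obtain ⟨E, h, hk⟩ := Nat.findGreatest_spec (P := fun k => ∃ E, Sep E ∧ E.card = k)
      (Nat.zero_le Bd) ⟨∅, by simp [Sep], rfl⟩
    refine ⟨E, h, fun E' h' => ?_⟩
    rw [hk]
    exact Nat.le_findGreatest (hbd E' h') ⟨E', h', rfl⟩
  refine le_trans (Nat.sInf_le ?_) (hbd E hE)
  choose g hg using fun x => hleb x (mem_univ x)
  refine ⟨fun j i => g (f^[a i] (E.equivFin.symm j : X)), fun j i => (hg _).1, ?_⟩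
  intro x _
  have hx : ∃ p ∈ E, ∀ i : Fin n, dist (f^[a i] x) (f^[a i] p) < δ := by
    by_contra! hcon
    have hxE : x ∉ E := by
      intro hxE
      obtain ⟨i, hi⟩ := hcon x hxE
      rw [dist_self] at hi; linarith
    have : Sep (insert x E) := by
      intro p hp q hq hpq
      rcases Finset.mem_insert.1 hp with rfl | hp' <;> rcases Finset.mem_insert.1 hq with rfl | hq'
      · exact absurd rfl hpq
      · exact hcon q hq'
      · obtain ⟨i, hi⟩ := hcon p hp'
        exact ⟨i, by rwa [dist_comm]⟩
      · exact hE p hp' q hq' hpq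
    have := hmax _ this
    rw [Finset.card_insert_of_notMem hxE] at this
    omega
  obtain ⟨p, hp, h⟩ := hx
  refine mem_iUnion.2 ⟨E.equivFin ⟨p, hp⟩, mem_iInter.2 fun i => ?_⟩
  simp only [Equiv.symm_apply_apply]
  exact (hg _).2 (h i)

lemma count_lower {X : Type*} [MetricSpace X] (f : X → X) (A B : Set X)
    (hAB : Disjoint A B) (hne : Aᶜ ≠ Bᶜ) (a : ℕ → ℕ) (n : ℕ) (I : Finset ℕ)
    (hI : IsIndepSetPair f A B I) (hIn : I.Nonempty) (hIa : ∀ j ∈ I, ∃ i < n, a i = j)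
    (𝒰 : Finset (Set X)) (h𝒰 : ∀ W, W ∈ 𝒰 ↔ W = Aᶜ ∨ W = Bᶜ) :
    2 ^ I.card ≤ seqCoverCountOn f Set.univ a 𝒰 n := by
  classical
  have hcov : ∀ x : X, ∃ W ∈ 𝒰, x ∈ W := by
    intro x
    by_cases hx : x ∈ A
    · exact ⟨Bᶜ, (h𝒰 _).2 (Or.inr rfl), fun h => Set.disjoint_left.1 hAB hx h⟩
    · exact ⟨Aᶜ, (h𝒰 _).2 (Or.inl rfl), hx⟩
  choose g hg hg' using hcov
  have hmem := Nat.sInf_mem (s := { m | ∃ c : Fin m → Fin n → Set X, (∀ j i, c j i ∈ 𝒰) ∧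
    (Set.univ : Set X) ⊆ ⋃ j, ⋂ i, f^[a i.1] ⁻¹' c j i }) (by
      refine ⟨Fintype.card (Fin n → 𝒰), fun j i =>
        ((Fintype.equivFin (Fin n → 𝒰)).symm j i : Set X), fun j i => Subtype.coe_prop _, ?_⟩
      intro x _
      refine mem_iUnion.2 ⟨Fintype.equivFin (Fin n → 𝒰)
        (fun i => ⟨g (f^[a i] x), hg _⟩), mem_iInter.2 fun i => ?_⟩
      simp only [Equiv.symm_apply_apply]
      exact hg' _)
  change 2 ^ I.card ≤ sInf _
  set m := sInf { m | ∃ c : Fin m → Fin n → Set X, (∀ j i, c j i ∈ 𝒰) ∧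
    (Set.univ : Set X) ⊆ ⋃ j, ⋂ i, f^[a i.1] ⁻¹' c j i }
  obtain ⟨c, hc, hcc⟩ := hmem
  have hp : ∀ σ : I → Bool, ∃ p : X, ∀ j : I, f^[j] p ∈ (if σ j then A else B) := by
    intro σ
    obtain ⟨p, hp⟩ := hI I subset_rfl hIn (fun j => if h : j ∈ I then σ ⟨j, h⟩ else true)
    refine ⟨p, fun j => ?_⟩
    have := mem_iInter₂.1 hp j j.2
    simpa using this
  choose p hp using hp
  have hq : ∀ σ : I → Bool, ∃ j : Fin m, ∀ i, f^[a i] (p σ) ∈ c j i := by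
    intro σ
    obtain ⟨j, hj⟩ := mem_iUnion.1 (hcc (mem_univ (p σ)))
    exact ⟨j, fun i => mem_iInter.1 hj i⟩
  choose q hq using hq
  have hinj : Function.Injective q := by
    intro σ τ h
    funext j
    obtain ⟨i, hi, hij⟩ := hIa j j.2
    have h1 := hq σ ⟨i, hi⟩
    have h2 := hq τ ⟨i, hi⟩
    rw [← h] at h2
    simp only [hij] at h1 h2
    have h3 := hp σ j
    have h4 := hp τ j
    rcases (h𝒰 _).1 (hc (q σ) ⟨i, hi⟩) with h5 | h5 <;> rw [h5] at h1 h2 <;>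
      cases hs : σ j <;> cases ht : τ j <;> simp [hs, ht] at h3 h4 ⊢ <;> first | exact h1 h3 | exact h2 h4
  have := Fintype.card_le_of_injective q hinj
  simpa using this

lemma blocks {X : Type*} (f : X → X) (A B : Set X)
    (h : ∀ m : ℕ, ∃ I : Finset ℕ, m ≤ I.card ∧ IsIndepSetPair f A B I) (F : Finset ℕ) :
    ∃ G : Finset ℕ, F ⊆ G ∧ (∀ b ∈ F, ∀ c ∈ G, c ∉ F → b < c) ∧ (∀ c ∈ G, c ∉ F → 1 ≤ c) ∧
      F.card < G.card ∧
      ∃ I ⊆ G, I.Nonempty ∧ IsIndepSetPair f A B I ∧ G.card ≤ 2 * I.card := by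
  obtain ⟨I, hI, hind⟩ := h (F.card + (F.sup id + 1) + 1)
  set I' := I \ Finset.range (F.sup id + 1) with hI'
  have hc : F.card + 1 ≤ I'.card := by
    have := Finset.le_card_sdiff (Finset.range (F.sup id + 1)) I
    rw [Finset.card_range] at this
    change _ ≤ (I \ Finset.range (F.sup id + 1)).card
    omega
  have hlt : ∀ c ∈ I', F.sup id < c := by
    intro c hc
    simp only [hI', Finset.mem_sdiff, Finset.mem_range] at hc
    omega
  have hle : ∀ b ∈ F, b ≤ F.sup id := fun b hb => Finset.le_sup (f := id) hb
  have hdis : Disjoint F I' := by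
    rw [Finset.disjoint_left]
    intro b hb hb'
    exact absurd (hle b hb) (by have := hlt b hb'; omega)
  have hcard := Finset.card_union_of_disjoint hdis
  refine ⟨F ∪ I', Finset.subset_union_left, ?_, ?_, by omega, I', Finset.subset_union_right,
    Finset.card_pos.1 (by omega), ?_, by omega⟩
  · intro b hb c hc hcF
    have := hlt c ((Finset.mem_union.1 hc).resolve_left hcF)
    have := hle b hb
    omega
  · intro c hc hcF
    have := hlt c ((Finset.mem_union.1 hc).resolve_left hcF)
    omega
  · intro J hJ
    exact hind J (hJ.trans Finset.sdiff_subset)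

lemma seq_exists {X : Type*} (f : X → X) (A B : Set X)
    (h : ∀ m : ℕ, ∃ I : Finset ℕ, m ≤ I.card ∧ IsIndepSetPair f A B I) :
    ∃ a : ℕ → ℕ, StrictMono a ∧ 1 ≤ a 0 ∧ ∀ N, ∃ n ≥ N, ∃ I : Finset ℕ, I.Nonempty ∧
      IsIndepSetPair f A B I ∧ n ≤ 2 * I.card ∧ ∀ j ∈ I, ∃ i < n, a i = j := by
  classical
  choose G h1 h2 h3 h4 h5 using blocks f A B h
  let Bk : ℕ → Finset ℕ := fun k => G^[k] ∅
  have hs : ∀ k, Bk (k+1) = G (Bk k) := fun k => Function.iterate_succ_apply' G k ∅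
  have hmono : Monotone Bk := monotone_nat_of_le_succ fun k => by rw [hs]; exact h1 _
  have hcard : ∀ k, k ≤ (Bk k).card := by
    intro k
    induction k with
    | zero => exact Nat.zero_le _
    | succ k ih => rw [hs]; have := h4 (Bk k); omega
  have hpos : ∀ k, ∀ c ∈ Bk k, 1 ≤ c := by
    intro k
    induction k with
    | zero => intro c hc; simp [Bk] at hc
    | succ k ih =>
      intro c hc
      by_cases hk : c ∈ Bk k
      · exact ih c hk
      · rw [hs] at hc; exact h3 _ c hc hk
  let p : ℕ → Prop := fun c => ∃ k, c ∈ Bk k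
  have hinit : ∀ k, ∀ b ∈ Bk k, ∀ c, p c → c < b → c ∈ Bk k := by
    rintro k b hb c ⟨j, hj⟩ hcb
    rcases le_total j k with hjk | hjk
    · exact hmono hjk hj
    · induction j, hjk using Nat.le_induction with
      | base => exact hj
      | succ j hkj ih =>
        by_cases hcj : c ∈ Bk j
        · exact ih hcj
        · rw [hs] at hj
          have := h2 _ b (hmono hkj hb) c hj hcj
          omega
  have hinf : {c | p c}.Infinite := by
    intro hfin
    have hle : (Bk (hfin.toFinset.card + 1)).card ≤ hfin.toFinset.card := by
      apply Finset.card_le_card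
      intro c hc
      rw [Set.Finite.mem_toFinset]
      exact ⟨_, hc⟩
    have := hcard (hfin.toFinset.card + 1)
    omega
  refine ⟨Nat.nth p, Nat.nth_strictMono hinf, ?_, ?_⟩
  · obtain ⟨k, hk⟩ := Nat.nth_mem_of_infinite hinf 0
    exact hpos k _ hk
  · intro N
    obtain ⟨I, hI, hIn, hind, hc⟩ := h5 (Bk N)
    rw [← hs] at hI hc
    refine ⟨(Bk (N+1)).card, by have := hcard (N+1); omega, I, hIn, hind, hc, ?_⟩
    intro j hj
    refine ⟨Nat.count p j, ?_, Nat.nth_count ⟨N+1, hI hj⟩⟩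
    rw [Nat.count_eq_card_filter_range]
    apply Finset.card_lt_card
    refine ⟨?_, ?_⟩
    · intro c hc
      simp only [Finset.mem_filter, Finset.mem_range] at hc
      exact hinit _ j (hI hj) c hc.2 hc.1
    · intro hsub
      have := hsub (hI hj)
      simp at this

/-- `h_∞(f) > 0` iff there is an IN-pair off the diagonal. -/
theorem supSeqEntropy_pos_iff_INPair {X : Type*} [MetricSpace X] [CompactSpace X]
    (f : X → X) (hf : Continuous f) :
    0 < supSeqEntropy f ↔ ∃ x y : X, INPair f x y ∧ x ≠ y := by
  classical
  constructor
  · intro hpos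
    by_contra! hno
    refine hpos.ne' ?_
    simp only [supSeqEntropy, supSeqEntropyOn, seqEntropyOn, ENNReal.iSup_eq_zero]
    intro a ha _ 𝒰 h𝒰
    obtain ⟨L, D, hb⟩ := count_bound f hno a ha 𝒰 h𝒰
    have hg := ENNReal.tendsto_ofReal (growth L D)
    rw [ENNReal.ofReal_zero] at hg
    refine (tendsto_of_tendsto_of_tendsto_of_le_of_le tendsto_const_nhds hg
      (fun _ => zero_le) fun n => ?_).limsup_eq
    apply ENNReal.ofReal_le_ofReal
    gcongr ?_ / _
    rcases Nat.eq_zero_or_pos (seqCoverCountOn f Set.univ a 𝒰 n) with h0 | h0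
    · rw [h0, Nat.cast_zero, Real.log_zero]; exact Real.log_natCast_nonneg _
    · exact Real.log_le_log (by exact_mod_cast h0) (by exact_mod_cast hb n)
  · rintro ⟨x, y, hxy, hne⟩
    have hd : 0 < dist x y := dist_pos.2 hne
    set A := Metric.closedBall x (dist x y / 3)
    set B := Metric.closedBall y (dist x y / 3)
    have hA : A ∈ 𝓝 x := Metric.closedBall_mem_nhds _ (by positivity)
    have hB : B ∈ 𝓝 y := Metric.closedBall_mem_nhds _ (by positivity)
    have hAB : Disjoint A B := Metric.closedBall_disjoint_closedBall (by linarith)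
    have hAB' : Aᶜ ≠ Bᶜ := by
      intro h
      have h := compl_injective h
      exact Set.disjoint_left.1 hAB (mem_of_mem_nhds hA) (h ▸ mem_of_mem_nhds hA)
    obtain ⟨a, ha, ha0, hI⟩ := seq_exists f A B (hxy A hA B hB)
    let 𝒰 : Finset (Set X) := {Aᶜ, Bᶜ}
    have h𝒰 : ∀ W, W ∈ 𝒰 ↔ W = Aᶜ ∨ W = Bᶜ := by simp [𝒰]
    have hcov : IsOpenCoverOn Set.univ 𝒰 := by
      refine ⟨fun W hW => ?_, fun z _ => ?_⟩
      · rcases (h𝒰 W).1 hW with rfl | rfl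
        · exact Metric.isClosed_closedBall.isOpen_compl
        · exact Metric.isClosed_closedBall.isOpen_compl
      · by_cases hz : z ∈ A
        · exact ⟨Bᶜ, (h𝒰 _).2 (Or.inr rfl), fun h => Set.disjoint_left.1 hAB hz h⟩
        · exact ⟨Aᶜ, (h𝒰 _).2 (Or.inl rfl), hz⟩
    have hl2 : 0 < Real.log 2 := Real.log_pos (by norm_num)
    have key : ENNReal.ofReal (Real.log 2 / 2) ≤ Filter.limsup
      (fun n : ℕ => ENNReal.ofReal (Real.log (seqCoverCountOn f Set.univ a 𝒰 n) / n)) Filter.atTop := by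
      refine le_limsup_of_frequently_le ?_
      rw [frequently_atTop]
      intro N
      obtain ⟨n, hn, I, hIn, hind, hc, hIa⟩ := hI (N + 1)
      refine ⟨n, by omega, ENNReal.ofReal_le_ofReal ?_⟩
      have h1 := count_lower f A B hAB hAB' a n I hind hIn hIa 𝒰 h𝒰
      have h2 : Real.log ((2:ℝ) ^ I.card) ≤ Real.log (seqCoverCountOn f Set.univ a 𝒰 n) :=
        Real.log_le_log (by positivity) (by exact_mod_cast h1)
      rw [Real.log_pow] at h2
      have hn0 : (0:ℝ) < n := by exact_mod_cast (by omega : 0 < n)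
      have hc' : (n:ℝ) ≤ 2 * I.card := by exact_mod_cast hc
      rw [le_div_iff₀ hn0]
      nlinarith
    refine lt_of_lt_of_le (ENNReal.ofReal_pos.2 (by positivity)) (key.trans ?_)
    unfold supSeqEntropy supSeqEntropyOn seqEntropyOn
    refine le_iSup_of_le a (le_iSup_of_le ha (le_iSup_of_le ha0 (le_iSup_of_le 𝒰 (le_iSup_of_le hcov le_rfl))))
end
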